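/- arXiv:1705.02280 — 4 statements merged into one kernel-verified Lean document; each statement's English description precedes it below -/
import Mathlib

section
/- There exist absolute constants C > 0 and p0 ∈ (0,1) such that for every finite simple graph G = (V,E) and every edge realization probability p with 0 < p ≤ p0, there exists a subgraph H = (V,Q) of G whose maximum degree is at most C·log(1/p)/p and such that the expected maximum matching size of a p-realization of H is at least 0.52 times the expected maximum matching size of a p-realization of G. -/
/-!
Fix a maximum matching `MM A` of every realization `A`, and let `x e` be the probability that
`e ∈ MM A`. The `x e` sum to `opt(G)`, and their sum at each vertex is at most `1`. Call `e` crucial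
if `x e ≥ p / 10 ^ 8`; each vertex has at most `10 ^ 8 / p` crucial edges, and all of them are kept.
The non-crucial edges carry a fractional matching of tiny weights, with load `n v` at `v`. Sampling
and Chebyshev's inequality (`exists_sparse`) replace it by a set `S` of degree `O(1 / p)` with nearly
the same loads, every edge of which is worth `10 ^ (-8)` once realized; a second application
(`survive`) shows that a realization of `S` still has these loads, up to a negligible loss.

In a realization `A` of the subgraph, give weight `10 ^ (-8)` to the well-behaved realized edges of
`S` and weight `α e` to the crucial edges of `MM A`, where `α e ≤ 1 - n v` at both ends `v` of `e`.
This is, up to a factor `1.02`, a fractional matching which exceeds an integral matching by at most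
a tiny amount on each edge. By the Tutte–Berge formula (`exists_tutteBerge`, deduced from Tutte's
theorem) such a fractional matching weighs at most `1.1` times the matching number (`rounding`):
only odd components with few vertices could violate this, and there the tiny weights do not matter.

It remains to bound the expected weight. With `c v` the load of the crucial edges at `v` and
`α e = max 0 (0.64 - ∑ v ∈ e, max 0 (n v - 0.36))`, the crucial edges lose at most
`∑ v, c v * max 0 (n v - 0.36) ≤ ∑ v, (1 - n v) * max 0 (n v - 0.36) ≤ 0.16 * ∑ v, n v` compared
with weight `0.64` on every edge. Hence, if `c₀` and `n₀` denote the total crucial and non-crucial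
mass, the expected weight is at least `0.64 * c₀ - 0.32 * n₀ + 0.98 * n₀ ≥ 0.64 * opt(G)`, and
`0.64 / (1.02 * 1.1) > 0.52`.
-/

open scoped Classical symmDiff
open Real

noncomputable section

/-- `E` is the edge set of a simple graph: it contains no loops. -/
def EdgeSimple {V : Type*} (E : Finset (Sym2 V)) : Prop :=
  ∀ e ∈ E, ¬ e.IsDiag

/-- `M` is a matching: it has no loops and distinct edges share no vertex. -/
def IsMatchingSet {V : Type*} (M : Finset (Sym2 V)) : Prop :=
  (∀ e ∈ M, ¬ e.IsDiag) ∧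
    ∀ e ∈ M, ∀ f ∈ M, e ≠ f → ∀ v : V, v ∈ e → v ∉ f

/-- The maximum matching size of the graph with edge set `E`. -/
def matchNum {V : Type*} (E : Finset (Sym2 V)) : ℕ :=
  (E.powerset.filter fun M => IsMatchingSet M).sup Finset.card

/-- The degree of the vertex `v` in the edge set `E`. -/
def edeg {V : Type*} (E : Finset (Sym2 V)) (v : V) : ℕ :=
  (E.filter fun e => v ∈ e).card

/-- The expected maximum matching size of a `p`-realization of `E`, where each
edge of `E` is kept independently with probability `p`. -/
def expMatch {V : Type*} (p : ℝ) (E : Finset (Sym2 V)) : ℝ :=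
  ∑ S ∈ E.powerset, p ^ S.card * (1 - p) ^ (E.card - S.card) * (matchNum S : ℝ)

/-- The set of vertices covered by the edge set `M`. -/
def mVerts {V : Type*} [Fintype V] (M : Finset (Sym2 V)) : Finset V :=
  Finset.univ.filter fun v => ∃ e ∈ M, v ∈ e

/-! ### Random subsets -/

/-- The expectation of `f A`, where the random set `A ⊆ E` contains each `i ∈ E` independently
with probability `q i`, written as a finite sum over the subsets of `E`. -/
def EX {ι : Type*} [DecidableEq ι] (E : Finset ι) (q : ι → ℝ) (f : Finset ι → ℝ) : ℝ :=
  ∑ A ∈ E.powerset, (∏ i ∈ A, q i) * (∏ i ∈ E \ A, (1 - q i)) * f A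

section Expectation

variable {ι : Type*} [DecidableEq ι]

lemma EX_empty (q : ι → ℝ) (f : Finset ι → ℝ) : EX ∅ q f = f ∅ := by
  simp [EX]

lemma EX_insert {a : ι} {E : Finset ι} (ha : a ∉ E) (q : ι → ℝ) (f : Finset ι → ℝ) :
    EX (insert a E) q f
      = q a * EX E q (fun A => f (insert a A)) + (1 - q a) * EX E q f := by
  unfold EX
  rw [Finset.sum_powerset_insert ha, add_comm, Finset.mul_sum, Finset.mul_sum]
  congr 1
  · refine Finset.sum_congr rfl fun A hA => ?_
    have hAE := Finset.mem_powerset.1 hA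
    have haA : a ∉ A := fun h => ha (hAE h)
    have h1 : insert a E \ insert a A = E \ A := by
      ext x; simp only [Finset.mem_sdiff, Finset.mem_insert]
      constructor
      · rintro ⟨h | h, h2⟩ <;> tauto
      · rintro ⟨h, h2⟩
        refine ⟨Or.inr h, ?_⟩
        rintro (rfl | h3)
        · exact ha h
        · exact h2 h3
    rw [Finset.prod_insert haA, h1]; ring
  · refine Finset.sum_congr rfl fun A hA => ?_
    have hAE := Finset.mem_powerset.1 hA
    have haA : a ∉ A := fun h => ha (hAE h)
    rw [Finset.insert_sdiff_of_notMem _ haA, Finset.prod_insert (by simp [ha])]; ring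

lemma EX_const (E : Finset ι) (q : ι → ℝ) (c : ℝ) : EX E q (fun _ => c) = c := by
  induction E using Finset.induction_on with
  | empty => simp [EX_empty]
  | insert a E ha ih => rw [EX_insert ha, ih]; ring

lemma EX_add (E : Finset ι) (q : ι → ℝ) (f g : Finset ι → ℝ) :
    EX E q (fun A => f A + g A) = EX E q f + EX E q g := by
  simp only [EX, mul_add, Finset.sum_add_distrib]

lemma EX_mul (E : Finset ι) (q : ι → ℝ) (c : ℝ) (f : Finset ι → ℝ) :
    EX E q (fun A => c * f A) = c * EX E q f := by
  simp only [EX, Finset.mul_sum]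
  exact Finset.sum_congr rfl fun A _ => by ring

lemma EX_sum {κ : Type*} (E : Finset ι) (q : ι → ℝ) (s : Finset κ) (f : κ → Finset ι → ℝ) :
    EX E q (fun A => ∑ k ∈ s, f k A) = ∑ k ∈ s, EX E q (f k) := by
  simp only [EX, Finset.mul_sum]
  exact Finset.sum_comm

lemma EX_mono {E : Finset ι} {q : ι → ℝ} (h0 : ∀ i ∈ E, 0 ≤ q i) (h1 : ∀ i ∈ E, q i ≤ 1)
    {f g : Finset ι → ℝ} (h : ∀ A ⊆ E, f A ≤ g A) : EX E q f ≤ EX E q g := by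
  refine Finset.sum_le_sum fun A hA => ?_
  have hAE := Finset.mem_powerset.1 hA
  refine mul_le_mul_of_nonneg_left (h A hAE) (mul_nonneg ?_ ?_)
  · exact Finset.prod_nonneg fun i hi => h0 i (hAE hi)
  · exact Finset.prod_nonneg fun i hi => sub_nonneg.2 (h1 i (Finset.sdiff_subset hi))

lemma EX_congr {E : Finset ι} {q : ι → ℝ} {f g : Finset ι → ℝ} (h : ∀ A ⊆ E, f A = g A) :
    EX E q f = EX E q g :=
  Finset.sum_congr rfl fun A hA => by rw [h A (Finset.mem_powerset.1 hA)]

lemma exists_le_of_EX {E : Finset ι} {q : ι → ℝ} (h0 : ∀ i ∈ E, 0 ≤ q i)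
    (h1 : ∀ i ∈ E, q i ≤ 1) {f : Finset ι → ℝ} {c : ℝ} (h : c ≤ EX E q f) :
    ∃ A ⊆ E, c ≤ f A := by
  by_contra! hc
  obtain ⟨B, hB, hmax⟩ := E.powerset.exists_max_image f ⟨∅, by simp⟩
  have h2 : EX E q f ≤ EX E q (fun _ => f B) :=
    EX_mono h0 h1 fun A hA => hmax A (Finset.mem_powerset.2 hA)
  rw [EX_const] at h2
  linarith [hc B (Finset.mem_powerset.1 hB)]

/-- The trace on `H` of a random subset of `E` is a random subset of `H` with the same
probabilities. -/
lemma EX_inter {E H : Finset ι} (hH : H ⊆ E) (q : ι → ℝ) (f : Finset ι → ℝ) :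
    EX E q (fun A => f (A ∩ H)) = EX H q f := by
  have key : ∀ T : Finset ι, Disjoint T H →
      EX (T ∪ H) q (fun A => f (A ∩ H)) = EX H q f := by
    intro T
    induction T using Finset.induction_on with
    | empty =>
      intro _
      rw [Finset.empty_union]
      exact EX_congr fun A hA => by rw [Finset.inter_eq_left.2 hA]
    | insert a T ha ih =>
      intro hd
      rw [Finset.disjoint_insert_left] at hd
      rw [Finset.insert_union, EX_insert (by simp [ha, hd.1])]
      simp only [Finset.insert_inter_of_notMem hd.1]
      rw [ih hd.2]; ring
  have := key (E \ H) Finset.sdiff_disjoint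
  rwa [Finset.sdiff_union_of_subset hH] at this

/-- Conditioning on the event that `e` is selected. -/
lemma EX_mem {E : Finset ι} {e : ι} (he : e ∈ E) (q : ι → ℝ) (f : Finset ι → ℝ) :
    EX E q (fun A => if e ∈ A then f A else 0)
      = q e * EX (E.erase e) q (fun A => f (insert e A)) := by
  conv_lhs => rw [← Finset.insert_erase he]
  rw [EX_insert (Finset.notMem_erase e E)]
  have h2 : EX (E.erase e) q (fun A => if e ∈ A then f A else 0) = 0 := by
    rw [← EX_const (E.erase e) q 0]
    refine EX_congr fun A hA => ?_
    rw [EX_const]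
    exact if_neg fun h => Finset.notMem_erase e E (hA h)
  rw [h2]; simp

/-- The variance of a weighted count of the selected elements; the shift `s` is what makes the
induction on `E` go through. -/
lemma EX_sq (E : Finset ι) (q a : ι → ℝ) (s : ℝ) :
    EX E q (fun A => (s + ∑ i ∈ A, a i - ∑ i ∈ E, a i * q i) ^ 2)
      = s ^ 2 + ∑ i ∈ E, a i ^ 2 * (q i * (1 - q i)) := by
  induction E using Finset.induction_on generalizing s with
  | empty => simp [EX_empty]
  | insert b E hb ih =>
    rw [EX_insert hb, Finset.sum_insert hb, Finset.sum_insert hb]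
    have e1 : EX E q (fun A => (s + ∑ i ∈ insert b A, a i - (a b * q b + ∑ i ∈ E, a i * q i)) ^ 2)
        = EX E q (fun A => ((s + a b - a b * q b) + ∑ i ∈ A, a i - ∑ i ∈ E, a i * q i) ^ 2) := by
      refine EX_congr fun A hA => ?_
      rw [Finset.sum_insert fun h => hb (hA h)]; ring
    have e2 : EX E q (fun A => (s + ∑ i ∈ A, a i - (a b * q b + ∑ i ∈ E, a i * q i)) ^ 2)
        = EX E q (fun A => ((s - a b * q b) + ∑ i ∈ A, a i - ∑ i ∈ E, a i * q i) ^ 2) :=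
      EX_congr fun A hA => by ring
    rw [e1, e2, ih, ih]; ring

end Expectation

lemma expMatch_eq_EX {V : Type*} (p : ℝ) (E : Finset (Sym2 V)) :
    expMatch p E = EX E (fun _ => p) (fun A => (matchNum A : ℝ)) := by
  refine Finset.sum_congr rfl fun A hA => ?_
  rw [Finset.prod_const, Finset.prod_const, Finset.card_sdiff_of_subset (Finset.mem_powerset.1 hA)]

lemma edeg_eq_sum {V : Type*} (A : Finset (Sym2 V)) (v : V) :
    (edeg A v : ℝ) = ∑ e ∈ A, if v ∈ e then (1 : ℝ) else 0 := by
  rw [edeg, Finset.card_filter]; push_cast; rfl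

/-- The edges of `A` both of whose ends `v` have degree at most `T v` in `A`. -/
def goodEdges {V : Type*} (T : V → ℝ) (A : Finset (Sym2 V)) : Finset (Sym2 V) :=
  A.filter fun e => ∀ v ∈ e, (edeg A v : ℝ) ≤ T v

lemma goodEdges_subset {V : Type*} (T : V → ℝ) (A : Finset (Sym2 V)) : goodEdges T A ⊆ A :=
  Finset.filter_subset _ _

/-- If each edge of `S` is kept with probability `q e`, the expected degrees are at most `σ`, and
each threshold `T v` exceeds the expected degree of `v` by at least `t + 1`, then in expectation
only a proportion `2σ / t²` of the kept edges has an end of degree above its threshold. Conditioned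
on `e` being kept, the other edges are still independent and `e` itself adds only `1` to the degree
of its ends, so Chebyshev's inequality applies at each of them. -/
lemma good_edges {V : Type*} (S : Finset (Sym2 V)) (q : Sym2 V → ℝ)
    (h0 : ∀ i ∈ S, 0 ≤ q i) (h1 : ∀ i ∈ S, q i ≤ 1) (T : V → ℝ) (t σ : ℝ) (ht : 0 < t)
    (hT : ∀ v, (∑ e ∈ S, if v ∈ e then q e else 0) + t + 1 ≤ T v)
    (hσ : ∀ v, (∑ e ∈ S, if v ∈ e then q e else 0) ≤ σ) :
    (1 - 2 * σ / t ^ 2) * ∑ e ∈ S, q e ≤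
      EX S q (fun A => ((goodEdges T A).card : ℝ)) := by
  have hcard : EX S q (fun A => ((goodEdges T A).card : ℝ))
      = ∑ e ∈ S, EX S q (fun A => if e ∈ A then
          (if ∀ v ∈ e, (edeg A v : ℝ) ≤ T v then (1 : ℝ) else 0) else 0) := by
    rw [← EX_sum]
    refine EX_congr fun A hA => ?_
    rw [goodEdges, Finset.card_filter, Finset.sum_ite_mem, Finset.inter_eq_right.2 hA]
    push_cast; rfl
  rw [hcard, Finset.mul_sum]
  refine Finset.sum_le_sum fun e he => ?_
  rw [EX_mem he, mul_comm]
  refine mul_le_mul_of_nonneg_left ?_ (h0 e he)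
  set R := S.erase e with hR
  have hRS : R ⊆ S := Finset.erase_subset _ _
  -- the centred number of retained edges at `v`, other than `e`
  let Z : V → Finset (Sym2 V) → ℝ := fun v A =>
    0 + (∑ i ∈ A, if v ∈ i then (1 : ℝ) else 0) - ∑ i ∈ R, (if v ∈ i then (1 : ℝ) else 0) * q i
  have hZ : ∀ v, EX R q (fun A => (Z v A) ^ 2) ≤ σ := by
    intro v
    have := EX_sq R q (fun i => if v ∈ i then (1 : ℝ) else 0) 0
    refine le_trans (le_of_eq this) ?_
    refine le_trans ?_ (hσ v)
    rw [zero_pow two_ne_zero, zero_add]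
    refine le_trans (Finset.sum_le_sum (g := fun i => if v ∈ i then q i else 0) fun i hi => ?_)
      (Finset.sum_le_sum_of_subset_of_nonneg hRS fun i hi _ => ?_)
    · have := h0 i (hRS hi)
      split_ifs
      · nlinarith
      · simp
    · split_ifs
      · exact h0 i hi
      · exact le_rfl
  have hbad : ∀ v, ∀ A ⊆ R, T v < edeg (insert e A) v → 1 ≤ (Z v A) ^ 2 / t ^ 2 := by
    intro v A hA hlt
    have heA : e ∉ A := fun h => Finset.notMem_erase e S (hA h)
    rw [edeg_eq_sum, Finset.sum_insert heA] at hlt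
    have h3 : ∑ i ∈ R, (if v ∈ i then (1 : ℝ) else 0) * q i
        ≤ ∑ e ∈ S, if v ∈ e then q e else 0 := by
      refine le_trans (le_of_eq ?_)
        (Finset.sum_le_sum_of_subset_of_nonneg hRS fun i hi _ => ?_)
      · exact Finset.sum_congr rfl fun i _ => by split_ifs <;> simp
      · split_ifs
        · exact h0 i hi
        · exact le_rfl
    have h4 : (if v ∈ e then (1 : ℝ) else 0) ≤ 1 := by split_ifs <;> norm_num
    have h5 := hT v
    have h6 : t ≤ Z v A := by
      simp only [Z]; linarith
    rw [one_le_div (by positivity)]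
    exact pow_le_pow_left₀ ht.le h6 2
  induction e using Sym2.ind with
  | _ x y =>
  have hmain : EX R q (fun A => 1 + (-(1 / t ^ 2)) * (Z x A ^ 2) + (-(1 / t ^ 2)) * (Z y A ^ 2)) ≤
      EX R q (fun A => if ∀ v ∈ s(x, y), (edeg (insert s(x, y) A) v : ℝ) ≤ T v
        then (1 : ℝ) else 0) := by
    refine EX_mono (fun i hi => h0 i (hRS hi)) (fun i hi => h1 i (hRS hi)) fun A hA => ?_
    have ex : 0 ≤ Z x A ^ 2 / t ^ 2 := by positivity
    have ey : 0 ≤ Z y A ^ 2 / t ^ 2 := by positivity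
    have e3 : 1 + (-(1 / t ^ 2)) * (Z x A ^ 2) + (-(1 / t ^ 2)) * (Z y A ^ 2)
        = 1 - Z x A ^ 2 / t ^ 2 - Z y A ^ 2 / t ^ 2 := by ring
    rw [e3]
    split_ifs with hg
    · linarith
    · push Not at hg
      obtain ⟨v, hv, hlt⟩ := hg
      have := hbad v A hA hlt
      rcases Sym2.mem_iff.1 hv with rfl | rfl <;> linarith
  refine le_trans ?_ hmain
  rw [EX_add, EX_add, EX_const, EX_mul, EX_mul]
  have hx := hZ x
  have hy := hZ y
  have ht2 : 0 ≤ 1 / t ^ 2 := by positivity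
  have e4 : 2 * σ / t ^ 2 = (1 / t ^ 2) * σ + (1 / t ^ 2) * σ := by ring
  rw [e4]
  nlinarith [mul_le_mul_of_nonneg_left hx ht2, mul_le_mul_of_nonneg_left hy ht2]

/-! ### Maximum matchings and the Tutte–Berge formula -/

lemma card_le_matchNum {V : Type*} {F M : Finset (Sym2 V)} (hMF : M ⊆ F)
    (hM : IsMatchingSet M) : M.card ≤ matchNum F :=
  Finset.le_sup (f := Finset.card) (Finset.mem_filter.2 ⟨Finset.mem_powerset.2 hMF, hM⟩)

lemma exists_matchNum {V : Type*} (F : Finset (Sym2 V)) :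
    ∃ M ⊆ F, IsMatchingSet M ∧ M.card = matchNum F := by
  have hne : (F.powerset.filter fun M => IsMatchingSet M).Nonempty :=
    ⟨∅, Finset.mem_filter.2 ⟨by simp, by simp [IsMatchingSet]⟩⟩
  obtain ⟨M, hM, h⟩ := Finset.exists_mem_eq_sup _ hne Finset.card
  rw [Finset.mem_filter, Finset.mem_powerset] at hM
  exact ⟨M, hM.1, hM.2, h.symm⟩

/-- The join of the graph with edge set `F` and a complete graph on `m` new vertices. -/
def joinGraph {V : Type*} (F : Finset (Sym2 V)) (m : ℕ) : SimpleGraph (V ⊕ Fin m) where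
  Adj a b := a ≠ b ∧ ∀ u v, a = Sum.inl u → b = Sum.inl v → s(u, v) ∈ F
  symm := ⟨fun _ _ h => ⟨h.1.symm, fun u v hu hv => Sym2.eq_swap ▸ h.2 v u hv hu⟩⟩
  loopless := ⟨fun _ h => h.1 rfl⟩

/-- In a perfect matching of the join at most `m` original vertices are matched to new ones, and
the remaining ones are matched among themselves by edges of `F`. -/
lemma card_le_of_joinGraph_perfect {V : Type*} [Fintype V] (F : Finset (Sym2 V)) (m : ℕ)
    (M : (joinGraph F m).Subgraph) (hM : M.IsPerfectMatching) :
    Fintype.card V ≤ 2 * matchNum F + m := by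
  rw [SimpleGraph.Subgraph.isPerfectMatching_iff] at hM
  choose f hf huniq using hM
  have hinv : ∀ a b, f a = b → f b = a := fun a b h =>
    (huniq b a (h ▸ (hf a).symm)).symm
  -- the original vertices whose partner is original as well
  let T : Finset V := Finset.univ.filter fun u => ∃ v, f (Sum.inl u) = Sum.inl v
  have hTc : (Tᶜ).card ≤ m := by
    have h1 : ∀ u ∈ Tᶜ, f (Sum.inl u) ∈ (Finset.univ : Finset (Fin m)).image Sum.inr := by
      intro u hu
      simp only [T, Finset.mem_compl, Finset.mem_filter, Finset.mem_univ, true_and] at hu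
      rcases h : f (Sum.inl u) with v | j
      · exact absurd ⟨v, h⟩ hu
      · simp
    refine (Finset.card_le_card_of_injOn (fun u => f (Sum.inl u)) h1 ?_).trans
      (Finset.card_image_le.trans (by simp))
    intro u _ v _ huv
    have e1 := hinv (Sum.inl u) _ rfl
    have e2 := hinv (Sum.inl v) _ rfl
    have huv' : f (Sum.inl u) = f (Sum.inl v) := huv
    rw [huv', e2] at e1
    exact (Sum.inl_injective e1).symm
  have h2 : ∀ u ∈ T, ∃ v, f (Sum.inl u) = Sum.inl v := fun u hu => (Finset.mem_filter.1 hu).2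
  choose! g hg using h2
  have hmatch : ∀ u ∈ T, ∀ w ∈ T, ∀ x, x ∈ s(u, g u) → x ∈ s(w, g w) →
      s(u, g u) = s(w, g w) := by
    intro u hu w hw x hx hx'
    have key : ∀ u ∈ T, x ∈ s(u, g u) → s(Sum.inl u, f (Sum.inl u))
        = s((Sum.inl x : V ⊕ Fin m), f (Sum.inl x)) := by
      intro u hu hx
      rcases Sym2.mem_iff.1 hx with rfl | rfl
      · rfl
      · rw [← hg u hu, hinv _ _ rfl, Sym2.eq_swap]
    have e := (key u hu hx).trans (key w hw hx').symm
    rw [hg u hu, hg w hw] at e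
    have := Sym2.map.injective (f := (Sum.inl : V → V ⊕ Fin m)) Sum.inl_injective
    exact this (by simpa using e)
  have hadj : ∀ u ∈ T, u ≠ g u ∧ s(u, g u) ∈ F := by
    intro u hu
    have h3 := M.adj_sub (hf (Sum.inl u))
    rw [hg u hu] at h3
    exact ⟨fun h => h3.1 (congrArg _ h), h3.2 _ _ rfl rfl⟩
  let N : Finset (Sym2 V) := T.image fun u => s(u, g u)
  have hN : IsMatchingSet N := by
    constructor
    · intro e he
      obtain ⟨u, hu, rfl⟩ := Finset.mem_image.1 he
      exact fun h => (hadj u hu).1 (Sym2.mk_isDiag_iff.1 h)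
    · intro e he e' he' hne x hx hx'
      obtain ⟨u, hu, rfl⟩ := Finset.mem_image.1 he
      obtain ⟨w, hw, rfl⟩ := Finset.mem_image.1 he'
      exact hne (hmatch u hu w hw x hx hx')
  have hNF : N ⊆ F := by
    intro e he
    obtain ⟨u, hu, rfl⟩ := Finset.mem_image.1 he
    exact (hadj u hu).2
  have hTN : T.card ≤ 2 * N.card := by
    refine Finset.card_le_mul_card_image T 2 fun e he => ?_
    obtain ⟨w, hw, rfl⟩ := Finset.mem_image.1 he
    refine le_trans (Finset.card_le_card (t := {w, g w}) fun u hu => ?_) Finset.card_le_two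
    have hu' : s(u, g u) = s(w, g w) := (Finset.mem_filter.1 hu).2
    have : u ∈ s(w, g w) := hu' ▸ Sym2.mem_mk_left u (g u)
    simpa using this
  have h4 := card_le_matchNum hNF hN
  have h5 := Finset.card_add_card_compl T
  omega

/-- The hard direction of the Tutte–Berge formula. There is a set `U` of vertices and a colouring
`c` of the rest, constant along edges of `F` (the colours stand for the components of `F` outside
`U`), with at least `|V| + |U| - 2 * matchNum F` classes of odd size. It follows from Tutte's
theorem for `joinGraph F m` with `m + 2` equal to the number of vertices missed by a maximum
matching; parity turns the one-component gap in Tutte's theorem into a gap of two. -/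
theorem exists_tutteBerge.{u} {V : Type u} [Fintype V] (F : Finset (Sym2 V)) :
    ∃ (U : Finset V) (ι : Type u) (c : V → ι),
      (∀ u v, u ∉ U → v ∉ U → s(u, v) ∈ F → u ≠ v → c u = c v) ∧
      ∃ I : Finset ι, (∀ i ∈ I, Odd {v | v ∉ U ∧ c v = i}.ncard) ∧
        Fintype.card V + U.card ≤ 2 * matchNum F + I.card := by
  -- if at most one vertex is missed, a single class and `U = ∅` suffice
  by_cases hd : Fintype.card V ≤ 2 * matchNum F + 1
  · refine ⟨∅, PUnit, fun _ => PUnit.unit, fun _ _ _ _ _ _ => rfl, ?_⟩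
    by_cases h0 : Fintype.card V ≤ 2 * matchNum F
    · exact ⟨∅, by simp, by simpa using h0⟩
    · have hV : Fintype.card V = 2 * matchNum F + 1 := by omega
      refine ⟨{PUnit.unit}, fun i _ => ?_, by simp [hV]⟩
      have : {v : V | v ∉ (∅ : Finset V) ∧ PUnit.unit = i} = Set.univ := by ext; simp
      rw [this, Set.ncard_univ, Nat.card_eq_fintype_card, hV]
      exact ⟨_, rfl⟩
  push Not at hd
  obtain ⟨m, hm⟩ : ∃ m, Fintype.card V = 2 * matchNum F + 2 + m := ⟨_, by
    rw [Nat.add_sub_cancel' (show 2 * matchNum F + 2 ≤ Fintype.card V by omega)]⟩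
  have hno : ¬ ∃ M : (joinGraph F m).Subgraph, M.IsPerfectMatching := by
    rintro ⟨M, hM⟩
    have := card_le_of_joinGraph_perfect F m M hM
    omega
  rw [SimpleGraph.tutte] at hno
  push Not at hno
  obtain ⟨U', hU'⟩ := hno
  unfold SimpleGraph.IsTutteViolator at hU'
  set D := (⊤ : (joinGraph F m).Subgraph).deleteVerts U' with hD
  have hmem : ∀ a, a ∈ D.verts ↔ a ∉ U' := by simp [hD]
  have hpar := SimpleGraph.odd_ncard_oddComponents (G := D.coe)
  have hcard : Nat.card D.verts + U'.ncard = Fintype.card V + m := by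
    have h1 : D.verts = U'ᶜ := by ext a; simp [hmem]
    rw [h1, Nat.card_coe_set_eq, add_comm, Set.ncard_add_ncard_compl]
    simp
  have hodd : U'.ncard + 2 ≤ D.coe.oddComponents.ncard := by
    rcases Nat.lt_or_ge (U'.ncard + 1) D.coe.oddComponents.ncard with h | h
    · omega
    · exfalso
      have h2 : D.coe.oddComponents.ncard = U'.ncard + 1 := by omega
      rw [h2, Nat.odd_iff, Nat.odd_iff] at hpar
      omega
  -- all new vertices are deleted: a surviving one would make the remaining graph connected
  have hnew : ∀ j : Fin m, Sum.inr j ∈ U' := by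
    intro j
    by_contra hj
    have hsub : Subsingleton D.coe.ConnectedComponent := by
      have hz : ∀ a : D.verts, D.coe.connectedComponentMk a
          = D.coe.connectedComponentMk ⟨Sum.inr j, (hmem _).2 hj⟩ := by
        intro a
        by_cases ha : (a : V ⊕ Fin m) = Sum.inr j
        · congr 1; exact Subtype.ext ha
        · refine SimpleGraph.ConnectedComponent.sound (SimpleGraph.Adj.reachable ?_)
          refine SimpleGraph.Subgraph.deleteVerts_adj.2
            ⟨trivial, (hmem _).1 a.2, trivial, hj, ?_⟩
          exact ⟨ha, fun u v _ h => by cases h⟩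
      refine ⟨fun x y => ?_⟩
      induction x using SimpleGraph.ConnectedComponent.ind with | _ x
      induction y using SimpleGraph.ConnectedComponent.ind with | _ y
      rw [hz x, hz y]
    have := Set.ncard_le_one_of_subsingleton D.coe.oddComponents
    omega
  let U : Finset V := Finset.univ.filter fun v => Sum.inl v ∈ U'
  have hUmem : ∀ v, v ∈ U ↔ Sum.inl v ∈ U' := by simp [U]
  have hUcard : U'.ncard = U.card + m := by
    have h1 : U' = ((U.disjSum (Finset.univ : Finset (Fin m)) : Finset _) : Set (V ⊕ Fin m)) := by
      ext a
      rcases a with v | j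
      · simp [hUmem]
      · simp [hnew]
    rw [h1, Set.ncard_coe_finset, Finset.card_disjSum]; simp
  let c : V → Option D.coe.ConnectedComponent := fun v =>
    if h : Sum.inl v ∈ U' then none
    else some (D.coe.connectedComponentMk ⟨Sum.inl v, (hmem _).2 h⟩)
  refine ⟨U, _, c, ?_, ?_⟩
  · intro u v hu hv huv hne
    rw [hUmem] at hu hv
    simp only [c, dif_neg hu, dif_neg hv]
    congr 1
    refine SimpleGraph.ConnectedComponent.sound (SimpleGraph.Adj.reachable ?_)
    refine SimpleGraph.Subgraph.deleteVerts_adj.2 ⟨trivial, hu, trivial, hv, ?_⟩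
    refine ⟨fun h => hne (Sum.inl_injective h), fun u' v' h h' => ?_⟩
    rw [← Sum.inl_injective h, ← Sum.inl_injective h']; exact huv
  · refine ⟨(Set.toFinite (some '' D.coe.oddComponents)).toFinset, fun i hi => ?_, ?_⟩
    · rw [Set.Finite.mem_toFinset] at hi
      obtain ⟨K, hK, rfl⟩ := hi
      have hK' : Odd K.supp.ncard := hK
      have hfib : {v | v ∉ U ∧ c v = some K}.ncard = K.supp.ncard := by
        rw [← Set.ncard_image_of_injective K.supp Subtype.val_injective,
          ← Set.ncard_image_of_injective _ (Sum.inl_injective (α := V) (β := Fin m))]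
        congr 1
        ext a
        rcases a with v | j
        · by_cases hv : Sum.inl v ∈ U'
          · simp [c, hv, hUmem, hmem]
          · simp [c, hv, hUmem, hmem]
        · simp [hmem, hnew]
      rwa [hfib]
    · rw [← Set.ncard_eq_toFinset_card, Set.ncard_image_of_injective _ (Option.some_injective _)]
      omega

/-! ### Rounding near-integral fractional matchings -/


lemma sum_vertices_eq {V : Type*} (K : Finset V) (F : Finset (Sym2 V)) (hF : EdgeSimple F)
    (hK : ∀ e ∈ F, ∀ v ∈ e, v ∈ K) (Y : Sym2 V → ℝ) :
    ∑ v ∈ K, ∑ e ∈ F, (if v ∈ e then Y e else 0) = 2 * ∑ e ∈ F, Y e := by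
  rw [Finset.sum_comm, Finset.mul_sum]
  refine Finset.sum_congr rfl fun e he => ?_
  rw [← Finset.sum_filter, Finset.sum_const]
  have h1 : K.filter (fun v => v ∈ e) = e.toFinset := by
    ext v
    simp only [Finset.mem_filter, Sym2.mem_toFinset]
    exact ⟨fun h => h.2, fun h => ⟨hK e he v h, h⟩⟩
  rw [h1, Sym2.card_toFinset_of_not_isDiag e (hF e he)]
  simp

lemma matching_degree_le_one {V : Type*} {M : Finset (Sym2 V)} (hM : IsMatchingSet M) (v : V) :
    ∑ e ∈ M, (if v ∈ e then (1 : ℝ) else 0) ≤ 1 := by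
  rw [← edeg_eq_sum]
  have : edeg M v ≤ 1 := by
    refine Finset.card_le_one.2 fun a ha b hb => ?_
    rw [Finset.mem_filter] at ha hb
    by_contra hne
    exact hM.2 a ha.1 b hb.1 hne v ha.2 hb.2
  exact_mod_cast this

/-- If a fractional matching `Y` exceeds the indicator of a matching `M` by at most a tiny `η`,
then inside a vertex set `K` its weight is at most `1.1 * ⌊|K| / 2⌋`. For `|K| ≥ 11` this is the
trivial bound `|K| / 2`; in a smaller odd set `M` has at most `⌊|K| / 2⌋` edges, and the at most
`|K| * (|K| + 1) / 2` edges contribute only `η` each beyond that. -/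
lemma local_bound {V : Type*} (F M : Finset (Sym2 V)) (hF : EdgeSimple F)
    (hM : IsMatchingSet M) (Y : Sym2 V → ℝ) (η : ℝ)
    (hη : η ≤ 1 / 450) (hY : ∀ e ∈ F, Y e ≤ (if e ∈ M then 1 else 0) + η)
    (hdeg : ∀ v, ∑ e ∈ F, (if v ∈ e then Y e else 0) ≤ 1) (hY0 : ∀ e, 0 ≤ Y e) (K : Finset V) :
    ∑ e ∈ F.filter (fun e => ∀ v ∈ e, v ∈ K), Y e
      ≤ 1.1 * (((K.card : ℝ) - if Odd K.card then 1 else 0) / 2) := by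
  set G := F.filter (fun e => ∀ v ∈ e, v ∈ K) with hG
  have hGF : G ⊆ F := Finset.filter_subset _ _
  have hGs : EdgeSimple G := fun e he => hF e (hGF he)
  have hGK : ∀ e ∈ G, ∀ v ∈ e, v ∈ K := fun e he => (Finset.mem_filter.1 he).2
  have h1 : 2 * ∑ e ∈ G, Y e ≤ K.card := by
    rw [← sum_vertices_eq K G hGs hGK]
    calc _ ≤ ∑ v ∈ K, (1 : ℝ) := Finset.sum_le_sum fun v _ => ?_
      _ = K.card := by simp
    refine le_trans (Finset.sum_le_sum_of_subset_of_nonneg hGF fun e _ _ => ?_) (hdeg v)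
    split_ifs
    · exact hY0 e
    · exact le_rfl
  have hK0 : (0 : ℝ) ≤ K.card := Nat.cast_nonneg _
  split_ifs with hodd
  swap
  · linarith
  obtain ⟨k, hk⟩ := hodd
  have hkr : (K.card : ℝ) = 2 * k + 1 := by rw [hk]; push_cast; ring
  rw [hkr] at h1 ⊢
  by_cases hk5 : 5 ≤ k
  · have : (5 : ℝ) ≤ k := by exact_mod_cast hk5
    linarith
  have h2 : 2 * ((G.filter (· ∈ M)).card : ℝ) ≤ K.card := by
    have := sum_vertices_eq K (G.filter (· ∈ M)) (fun e he => hGs e (Finset.mem_filter.1 he).1)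
      (fun e he => hGK e (Finset.mem_filter.1 he).1) (fun _ => 1)
    rw [Finset.sum_const, nsmul_eq_mul, mul_one] at this
    rw [← this]
    calc _ ≤ ∑ v ∈ K, (1 : ℝ) := Finset.sum_le_sum fun v _ => ?_
      _ = K.card := by simp
    refine le_trans (Finset.sum_le_sum_of_subset_of_nonneg (t := M) ?_ fun e _ _ => ?_)
      (matching_degree_le_one hM v)
    · intro e he; exact (Finset.mem_filter.1 he).2
    · split_ifs <;> norm_num
  have h3 : (G.filter (· ∈ M)).card ≤ k := by
    have : 2 * (G.filter (· ∈ M)).card ≤ K.card := by exact_mod_cast h2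
    omega
  have h4 : G.card ≤ (2 * k + 1 + 1).choose 2 := by
    rw [← hk, ← Finset.card_sym2]
    exact Finset.card_le_card fun e he => Finset.mem_sym2_iff.2 (hGK e he)
  have h5 : ∑ e ∈ G, Y e ≤ (G.filter (· ∈ M)).card + η * G.card := by
    refine le_trans (Finset.sum_le_sum fun e he => hY e (hGF he)) (le_of_eq ?_)
    rw [Finset.sum_add_distrib, Finset.card_filter, Finset.sum_const, nsmul_eq_mul]
    push_cast; ring
  have h3' : ((G.filter (· ∈ M)).card : ℝ) ≤ k := by exact_mod_cast h3
  have h4' : (G.card : ℝ) ≤ ((2 * k + 1 + 1).choose 2 : ℕ) := by exact_mod_cast h4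
  have h6 : η * G.card ≤ (1 / 450) * ((2 * k + 1 + 1).choose 2 : ℕ) :=
    mul_le_mul hη h4' (Nat.cast_nonneg _) (by norm_num)
  rcases Nat.eq_zero_or_pos k with rfl | hkpos
  · have hGe : G = ∅ := by
      rw [Finset.eq_empty_iff_forall_notMem]
      intro e he
      obtain ⟨x, hx⟩ := Finset.card_eq_one.1 (by simpa using hk)
      have hv := hGK e he
      have hd := hGs e he
      induction e using Sym2.ind with
      | _ a b =>
        have ha := hv a (Sym2.mem_mk_left a b)
        have hb := hv b (Sym2.mem_mk_right a b)
        rw [hx, Finset.mem_singleton] at ha hb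
        exact hd (Sym2.mk_isDiag_iff.2 (ha.trans hb.symm))
    rw [hGe]; simp
  · have hk4 : k ≤ 4 := by omega
    have h7 : ∑ e ∈ G, Y e ≤ k + (1 / 450) * ((2 * k + 1 + 1).choose 2 : ℕ) := by linarith
    clear h1 h2 h3 h4 h5 h3' h4' h6 hk hkr hk5 hdeg hY
    interval_cases k <;> norm_num [Nat.choose] at h7 ⊢ <;> linarith

/-- A fractional matching that puts weights `α e ≤ 1` on the edges of a matching `M` and a tiny
weight `η` on the edges of `B` has total weight at most `1.1` times the matching number: in the
Tutte–Berge decomposition, edges meeting `U` weigh at most `|U|` in total, and `local_bound`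
bounds the weight inside each class. -/
theorem rounding {V : Type*} [Fintype V] (F M B : Finset (Sym2 V)) (hF : EdgeSimple F)
    (hMF : M ⊆ F) (hBF : B ⊆ F) (hM : IsMatchingSet M) (α : Sym2 V → ℝ)
    (hα0 : ∀ e, 0 ≤ α e) (hα1 : ∀ e, α e ≤ 1) (η : ℝ) (hη0 : 0 ≤ η) (hη : η ≤ 1 / 450)
    (hdeg : ∀ v, ∑ e ∈ M, (if v ∈ e then α e else 0) + η * edeg B v ≤ 1) :
    ∑ e ∈ M, α e + η * B.card ≤ 1.1 * matchNum F := by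
  let Y : Sym2 V → ℝ := fun e => (if e ∈ M then α e else 0) + if e ∈ B then η else 0
  have hY0 : ∀ e, 0 ≤ Y e := fun e => by
    have := hα0 e
    simp only [Y]; split_ifs <;> linarith
  have hYsum : ∑ e ∈ F, Y e = ∑ e ∈ M, α e + η * B.card := by
    simp only [Y]
    rw [Finset.sum_add_distrib, Finset.sum_ite_mem, Finset.sum_ite_mem,
      Finset.inter_eq_right.2 hMF, Finset.inter_eq_right.2 hBF, Finset.sum_const, nsmul_eq_mul,
      mul_comm η]
  have hYdeg : ∀ v, ∑ e ∈ F, (if v ∈ e then Y e else 0) ≤ 1 := by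
    intro v
    refine le_trans (le_of_eq ?_) (hdeg v)
    have : ∀ e, (if v ∈ e then Y e else 0) = (if e ∈ M then (if v ∈ e then α e else 0) else 0)
        + if e ∈ B then (if v ∈ e then η else 0) else 0 := fun e => by
      simp only [Y]; split_ifs <;> simp
    simp only [this]
    rw [Finset.sum_add_distrib, Finset.sum_ite_mem, Finset.sum_ite_mem,
      Finset.inter_eq_right.2 hMF, Finset.inter_eq_right.2 hBF, edeg_eq_sum, Finset.mul_sum]
    congr 1
    exact Finset.sum_congr rfl fun e _ => by split_ifs <;> simp
  have hYle : ∀ e ∈ F, Y e ≤ (if e ∈ M then 1 else 0) + η := fun e _ => by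
    have := hα1 e
    simp only [Y]; split_ifs <;> linarith
  obtain ⟨U, ι, c, hc, I, hI, hcount⟩ := exists_tutteBerge F
  let K : ι → Finset V := fun i => Uᶜ.filter fun v => c v = i
  let J : Finset ι := Uᶜ.image c
  have hKc : ∀ i, {v | v ∉ U ∧ c v = i}.ncard = (K i).card := by
    intro i
    rw [← Set.ncard_coe_finset]
    congr 1; ext v; simp [K]
  have hIJ : I ⊆ J := by
    intro i hi
    have := hI i hi
    rw [hKc] at this
    obtain ⟨v, hv⟩ := Finset.card_pos.1 this.pos
    rw [Finset.mem_filter] at hv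
    exact Finset.mem_image.2 ⟨v, hv.1, hv.2⟩
  -- every edge of `F` meets `U` or lies inside one colour class
  have hpt : ∀ e ∈ F, Y e ≤ ∑ u ∈ U, (if u ∈ e then Y e else 0)
      + ∑ i ∈ J, if ∀ v ∈ e, v ∈ K i then Y e else 0 := by
    intro e he
    have n1 : ∀ u ∈ U, 0 ≤ (if u ∈ e then Y e else 0) := fun u _ => by
      split_ifs
      · exact hY0 e
      · exact le_rfl
    have n2 : ∀ i ∈ J, 0 ≤ (if ∀ v ∈ e, v ∈ K i then Y e else 0) := fun i _ => by
      split_ifs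
      · exact hY0 e
      · exact le_rfl
    by_cases hu : ∃ u ∈ U, u ∈ e
    · obtain ⟨u, huU, hue⟩ := hu
      have h1 := Finset.single_le_sum n1 huU
      rw [if_pos hue] at h1
      linarith [Finset.sum_nonneg n2]
    · push Not at hu
      obtain ⟨i, hiJ, hi⟩ : ∃ i ∈ J, ∀ v ∈ e, v ∈ K i := by
        have hd := hF e he
        induction e using Sym2.ind with
        | _ a b =>
          have ha : a ∉ U := fun h => hu a h (Sym2.mem_mk_left a b)
          have hb : b ∉ U := fun h => hu b h (Sym2.mem_mk_right a b)
          have hab := hc a b ha hb he fun h => hd (Sym2.mk_isDiag_iff.2 h)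
          refine ⟨c a, Finset.mem_image.2 ⟨a, by simpa using ha, rfl⟩, fun v hv => ?_⟩
          rcases Sym2.mem_iff.1 hv with rfl | rfl
          · simp [K, ha]
          · simp [K, hb, hab]
      have h1 := Finset.single_le_sum n2 hiJ
      rw [if_pos hi] at h1
      linarith [Finset.sum_nonneg n1]
  have hmain : ∑ e ∈ F, Y e ≤ U.card
      + ∑ i ∈ J, 1.1 * ((((K i).card : ℝ) - if i ∈ I then 1 else 0) / 2) := by
    refine (Finset.sum_le_sum hpt).trans ?_
    rw [Finset.sum_add_distrib, Finset.sum_comm (s := F) (t := U),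
      Finset.sum_comm (s := F) (t := J)]
    refine add_le_add ?_ (Finset.sum_le_sum fun i _ => ?_)
    · calc _ ≤ ∑ u ∈ U, (1 : ℝ) := Finset.sum_le_sum fun u _ => hYdeg u
        _ = U.card := by simp
    · rw [← Finset.sum_filter]
      refine le_trans (le_of_eq (Finset.sum_congr (by ext; simp) fun _ _ => rfl))
        ((local_bound F M hF hM Y η hη hYle hYdeg hY0 (K i)).trans ?_)
      have : (if i ∈ I then (1 : ℝ) else 0) ≤ if Odd (K i).card then 1 else 0 := by
        by_cases hi : i ∈ I
        · rw [if_pos hi, if_pos (hKc i ▸ hI i hi)]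
        · rw [if_neg hi]; split_ifs <;> norm_num
      linarith
  rw [← Finset.mul_sum, ← Finset.sum_div, Finset.sum_sub_distrib, Finset.sum_ite_mem,
    Finset.inter_eq_right.2 hIJ] at hmain
  have hKsum : ∑ i ∈ J, ((K i).card : ℝ) = Fintype.card V - U.card := by
    have h1 := Finset.card_eq_sum_card_image c Uᶜ
    have h2 := Finset.card_add_card_compl U
    rw [h1] at h2
    have h3 : (U.card : ℝ) + ∑ i ∈ J, ((K i).card : ℝ) = Fintype.card V := by exact_mod_cast h2
    linarith
  have hcount' : (Fintype.card V : ℝ) + U.card ≤ 2 * matchNum F + I.card := by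
    exact_mod_cast hcount
  rw [hKsum, Finset.sum_const, nsmul_eq_mul, mul_one, hYsum] at hmain
  have : (0 : ℝ) ≤ U.card := Nat.cast_nonneg _
  linarith

/-! ### Sparsifying the non-crucial edges -/

/-- The total `x`-weight of the edges of `F` at the vertex `v`. -/
def wdeg {V : Type*} (F : Finset (Sym2 V)) (x : Sym2 V → ℝ) (v : V) : ℝ :=
  ∑ e ∈ F, if v ∈ e then x e else 0

lemma wdeg_nonneg {V : Type*} {F : Finset (Sym2 V)} {x : Sym2 V → ℝ} (hx : ∀ e, 0 ≤ x e)
    (v : V) : 0 ≤ wdeg F x v :=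
  Finset.sum_nonneg fun e _ => by
    split_ifs
    · exact hx e
    · exact le_rfl

lemma wdeg_mul {V : Type*} (F : Finset (Sym2 V)) (x : Sym2 V → ℝ) (c : ℝ) (v : V) :
    ∑ e ∈ F, (if v ∈ e then c * x e else 0) = c * wdeg F x v := by
  rw [wdeg, Finset.mul_sum]
  exact Finset.sum_congr rfl fun e _ => by split_ifs <;> simp

lemma edeg_mono {V : Type*} {A B : Finset (Sym2 V)} (h : A ⊆ B) (v : V) : edeg A v ≤ edeg B v :=
  Finset.card_le_card (Finset.filter_subset_filter _ h)

lemma edeg_union_le {V : Type*} (A B : Finset (Sym2 V)) (v : V) :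
    edeg (A ∪ B) v ≤ edeg A v + edeg B v := by
  rw [edeg, Finset.filter_union]
  exact Finset.card_union_le _ _

/-- A vertex on no good edge has degree `0` among the good edges, hence the hypothesis `0 ≤ T`. -/
lemma edeg_good_le {V : Type*} (A : Finset (Sym2 V)) (T : V → ℝ) (hT : ∀ v, 0 ≤ T v) (v : V) :
    (edeg (goodEdges T A) v : ℝ) ≤ T v := by
  set B := goodEdges T A with hB
  rcases Nat.eq_zero_or_pos (edeg B v) with h | h
  · rw [h]; simpa using hT v
  · obtain ⟨e, he⟩ := Finset.card_pos.1 h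
    rw [Finset.mem_filter, hB, goodEdges, Finset.mem_filter] at he
    refine le_trans ?_ (he.1.2 v he.2)
    exact_mod_cast edeg_mono (goodEdges_subset T A) v

/-- Edges of weight at most `p / 10 ^ 8` can be thinned to an unweighted set `S` in which
every edge carries weight `p / 10 ^ 8`: almost all of the total weight is kept, and the weight at
each vertex grows by at most `0.01`. Such an `S` arises by sampling `e` with probability
`10 ^ 8 * x e / p` and dropping the edges with an end of too large degree. -/
lemma exists_sparse {V : Type*} (N : Finset (Sym2 V)) (x : Sym2 V → ℝ) (p : ℝ) (hp0 : 0 < p)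
    (hp1 : p ≤ 1) (hx : ∀ e, 0 ≤ x e) (hN : ∀ e ∈ N, x e ≤ p / 10 ^ 8)
    (hdeg : ∀ v, wdeg N x v ≤ 1) :
    ∃ S ⊆ N, 0.99 * (10 ^ 8 / p * ∑ e ∈ N, x e) ≤ (S.card : ℝ) ∧
      ∀ v, (edeg S v : ℝ) ≤ 10 ^ 8 / p * (wdeg N x v + 0.01) := by
  have hc : 0 < 10 ^ 8 / p := by positivity
  have hinv : 10 ^ 8 ≤ 10 ^ 8 / p := by
    rw [le_div_iff₀ hp0]; nlinarith
  have h0 : ∀ e ∈ N, 0 ≤ 10 ^ 8 / p * x e := fun e _ => mul_nonneg hc.le (hx e)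
  have h1 : ∀ e ∈ N, 10 ^ 8 / p * x e ≤ 1 := fun e he => by
    have := mul_le_mul_of_nonneg_left (hN e he) hc.le
    refine this.trans (le_of_eq ?_)
    field_simp
  have hg := good_edges N (fun e => 10 ^ 8 / p * x e) h0 h1
    (fun v => 10 ^ 8 / p * (wdeg N x v + 0.01)) (10 ^ 8 / p * 0.005) (10 ^ 8 / p) (by positivity)
    (fun v => by rw [wdeg_mul]; linarith)
    (fun v => by rw [wdeg_mul]; nlinarith [hdeg v])
  obtain ⟨A, hAN, hA⟩ := exists_le_of_EX h0 h1 hg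
  refine ⟨_, (goodEdges_subset _ _).trans hAN, le_trans ?_ hA,
    fun v => edeg_good_le A _ (fun u => ?_) v⟩
  · rw [← Finset.mul_sum]
    refine mul_le_mul_of_nonneg_right ?_
      (mul_nonneg hc.le (Finset.sum_nonneg fun e _ => hx e))
    have : 2 * (10 ^ 8 / p) / (10 ^ 8 / p * 0.005) ^ 2 ≤ 0.01 := by
      rw [div_le_iff₀ (by positivity)]
      nlinarith
    linarith
  · have := wdeg_nonneg (F := N) hx u
    positivity

/-- In a `p`-realization of the thinned set `S`, almost all of the expected number of edges remains
after the edges with an end of degree above `10 ^ 8 * (n v + 0.02)` are dropped. -/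
lemma survive {V : Type*} (S : Finset (Sym2 V)) (n : V → ℝ) (p : ℝ) (hp0 : 0 < p)
    (hp1 : p ≤ 1) (hn1 : ∀ v, n v ≤ 1)
    (hS : ∀ v, (edeg S v : ℝ) ≤ 10 ^ 8 / p * (n v + 0.01)) :
    0.99 * (p * S.card) ≤ EX S (fun _ => p) (fun A =>
      ((goodEdges (fun v => 10 ^ 8 * (n v + 0.02)) A).card : ℝ)) := by
  have hd : ∀ v, ∑ e ∈ S, (if v ∈ e then p else 0) ≤ 10 ^ 8 * (n v + 0.01) := fun v => by
    have e1 : ∑ e ∈ S, (if v ∈ e then p else 0) = p * edeg S v := by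
      rw [edeg_eq_sum, Finset.mul_sum]
      exact Finset.sum_congr rfl fun e _ => by split_ifs <;> simp
    rw [e1]
    have := mul_le_mul_of_nonneg_left (hS v) hp0.le
    refine this.trans (le_of_eq ?_)
    field_simp
  have hg := good_edges S (fun _ => p) (fun _ _ => hp0.le) (fun _ _ => hp1)
    (fun v => 10 ^ 8 * (n v + 0.02)) (9 * 10 ^ 5) (2 * 10 ^ 8) (by positivity)
    (fun v => by linarith [hd v])
    (fun v => by linarith [hd v, hn1 v])
  refine le_trans ?_ hg
  rw [Finset.sum_const, nsmul_eq_mul, mul_comm p]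
  refine mul_le_mul_of_nonneg_right (by norm_num) (by positivity)

/-! ### The sparse subgraph -/

/-- The theorem with the degree bound `3 * 10 ^ 8 / p`, valid for all `p ≤ 1`. The subgraph consists
of the crucial edges `Cr`, those with matching probability `x e ≥ p / 10 ^ 8`, and a thinning `S`
of the remaining edges `N`. -/
theorem exists_subgraph {V : Type*} [Fintype V] (E : Finset (Sym2 V)) (hE : EdgeSimple E) (p : ℝ)
    (hp0 : 0 < p) (hp1 : p ≤ 1) :
    ∃ Q ⊆ E, (∀ v : V, (edeg Q v : ℝ) ≤ 3 * 10 ^ 8 / p) ∧ 0.52 * expMatch p E ≤ expMatch p Q := by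
  choose MM hMA hMM hcard using fun A : Finset (Sym2 V) => exists_matchNum A
  have h0 : ∀ i ∈ E, 0 ≤ (fun _ : Sym2 V => p) i := fun _ _ => hp0.le
  have h1 : ∀ i ∈ E, (fun _ : Sym2 V => p) i ≤ 1 := fun _ _ => hp1
  -- the probability that `e` lies in the chosen maximum matching of a realization
  let x : Sym2 V → ℝ := fun e => EX E (fun _ => p) fun A => if e ∈ MM A then 1 else 0
  have hx : ∀ e, 0 ≤ x e := fun e => by
    rw [← EX_const E (fun _ => p) 0]
    exact EX_mono h0 h1 fun A _ => by split_ifs <;> norm_num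
  have hlin : ∀ (F : Finset (Sym2 V)) (a : Sym2 V → ℝ), ∑ e ∈ F, a e * x e
      = EX E (fun _ => p) fun A => ∑ e ∈ F.filter (· ∈ MM A), a e := by
    intro F a
    simp only [x]
    simp_rw [← EX_mul]
    rw [← EX_sum]
    refine EX_congr fun A _ => ?_
    rw [Finset.sum_filter]
    exact Finset.sum_congr rfl fun e _ => by split_ifs <;> simp
  have hsum : ∑ e ∈ E, x e = expMatch p E := by
    have := hlin E fun _ => 1
    simp only [one_mul] at this
    rw [this, expMatch_eq_EX]
    refine EX_congr fun A hA => ?_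
    rw [← hcard A, Finset.sum_const, nsmul_eq_mul, mul_one]
    congr 2
    ext e
    simp only [Finset.mem_filter]
    exact ⟨fun h => h.2, fun h => ⟨hA (hMA A h), h⟩⟩
  have hdegE : ∀ v, wdeg E x v ≤ 1 := by
    intro v
    have h2 : wdeg E x v = ∑ e ∈ E, (if v ∈ e then 1 else 0) * x e :=
      Finset.sum_congr rfl fun e _ => by split_ifs <;> simp
    rw [h2, hlin, ← EX_const E (fun _ => p) 1]
    refine EX_mono h0 h1 fun A _ => ?_
    rw [EX_const]
    refine le_trans (Finset.sum_le_sum_of_subset_of_nonneg ?_ fun e _ _ => ?_)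
      (matching_degree_le_one (hMM A) v)
    · intro e he; exact (Finset.mem_filter.1 he).2
    · split_ifs <;> norm_num
  set Cr := E.filter fun e => p / 10 ^ 8 ≤ x e with hCr
  set N := E.filter fun e => ¬ p / 10 ^ 8 ≤ x e with hN
  have hCrE : Cr ⊆ E := Finset.filter_subset _ _
  have hNE : N ⊆ E := Finset.filter_subset _ _
  have hsplit : ∀ v, wdeg Cr x v + wdeg N x v ≤ 1 := fun v => by
    refine le_trans (le_of_eq ?_) (hdegE v)
    exact Finset.sum_filter_add_sum_filter_not E _ _
  have hsplit0 : ∑ e ∈ Cr, x e + ∑ e ∈ N, x e = expMatch p E := by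
    rw [← hsum]
    exact Finset.sum_filter_add_sum_filter_not E _ _
  have hc0 : ∀ v, 0 ≤ wdeg Cr x v := fun v => wdeg_nonneg hx v
  have hn0 : ∀ v, 0 ≤ wdeg N x v := fun v => wdeg_nonneg hx v
  have hn1 : ∀ v, wdeg N x v ≤ 1 := fun v => by linarith [hsplit v, hc0 v]
  obtain ⟨S, hSN, hScard, hSdeg⟩ := exists_sparse N x p hp0 hp1 hx
    (fun e he => (not_le.1 (Finset.mem_filter.1 he).2).le) hn1
  have hSE := hSN.trans hNE
  have hsurv := survive S (wdeg N x) p hp0 hp1 hn1 hSdeg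
  have hQE : Cr ∪ S ⊆ E := Finset.union_subset hCrE hSE
  refine ⟨Cr ∪ S, hQE, fun v => ?_, ?_⟩
  · have d1 : (edeg Cr v : ℝ) ≤ 10 ^ 8 / p := by
      have h3 : p / 10 ^ 8 * edeg Cr v ≤ wdeg Cr x v := by
        rw [edeg_eq_sum, Finset.mul_sum]
        refine Finset.sum_le_sum fun e he => ?_
        have := (Finset.mem_filter.1 he).2
        split_ifs
        · simpa using this
        · simp
      have h4 : p / 10 ^ 8 * edeg Cr v ≤ 1 := by linarith [hsplit v, hn0 v]
      rw [le_div_iff₀ hp0]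
      linarith
    have d2 : (edeg S v : ℝ) ≤ 2 * (10 ^ 8 / p) := by
      have : 0 < 10 ^ 8 / p := by positivity
      nlinarith [hSdeg v, hn1 v]
    have d3 : (edeg (Cr ∪ S) v : ℝ) ≤ edeg Cr v + edeg S v := by
      exact_mod_cast edeg_union_le Cr S v
    have e1 : 3 * 10 ^ 8 / p = 3 * (10 ^ 8 / p) := by ring
    linarith
  -- weights on the crucial edges, chosen so that `α e + n v ≤ 1` whenever `v ∈ e`
  let h : V → ℝ := fun v => max 0 (wdeg N x v - 0.36)
  have hh0 : ∀ v, 0 ≤ h v := fun v => le_max_left _ _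
  let α : Sym2 V → ℝ := fun e => max 0 (0.64 - ∑ v, if v ∈ e then h v else 0)
  have hterm : ∀ (e : Sym2 V) (v : V), 0 ≤ (if v ∈ e then h v else 0) := fun e v => by
    split_ifs
    · exact hh0 v
    · exact le_rfl
  have hα0 : ∀ e, 0 ≤ α e := fun e => le_max_left _ _
  have hα1 : ∀ e, α e ≤ 1 := fun e => by
    refine max_le (by norm_num) ?_
    linarith [Finset.sum_nonneg fun v (_ : v ∈ Finset.univ) => hterm e v]
  have hαn : ∀ (e : Sym2 V) (v : V), v ∈ e → α e ≤ 1 - wdeg N x v := fun e v hv => by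
    refine max_le (by linarith [hn1 v]) ?_
    have h3 := Finset.single_le_sum (fun v _ => hterm e v) (Finset.mem_univ v)
    rw [if_pos hv] at h3
    have h4 : wdeg N x v - 0.36 ≤ h v := le_max_right _ _
    linarith
  -- the non-crucial edges that receive weight `10⁻⁸`; they weigh at most `n v + 0.02` at `v`
  let good : Finset (Sym2 V) → Finset (Sym2 V) :=
    goodEdges fun v => 10 ^ 8 * (wdeg N x v + 0.02)
  have hround : ∀ A ⊆ E, ∑ e ∈ Cr.filter (· ∈ MM A), α e + 1 / 10 ^ 8 * ((good (A ∩ S)).card : ℝ)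
      ≤ 1.122 * (matchNum (A ∩ (Cr ∪ S)) : ℝ) := by
    intro A hA
    have hMsub : Cr.filter (· ∈ MM A) ⊆ MM A := fun e he => (Finset.mem_filter.1 he).2
    -- the total weight at a vertex is at most `1.02`, whence the normalisation by `1 / 1.02`
    have hr := rounding (A ∩ (Cr ∪ S)) (Cr.filter (· ∈ MM A)) (good (A ∩ S))
      (fun e he => hE e (hA (Finset.mem_inter.1 he).1))
      (fun e he => Finset.mem_inter.2 ⟨hMA A (hMsub he),
        Finset.mem_union_left _ (Finset.mem_filter.1 he).1⟩)
      ((goodEdges_subset _ _).trans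
        (Finset.inter_subset_inter_left Finset.subset_union_right))
      ⟨fun e he => (hMM A).1 e (hMsub he),
        fun e he f hf => (hMM A).2 e (hMsub he) f (hMsub hf)⟩
      (fun e => 1 / 1.02 * α e) (fun e => mul_nonneg (by norm_num) (hα0 e))
      (fun e => by linarith [hα1 e]) (1 / (1.02 * 10 ^ 8)) (by norm_num) (by norm_num)
      (fun v => ?_)
    · rw [← Finset.mul_sum] at hr
      linarith
    · have hb : (edeg (good (A ∩ S)) v : ℝ) ≤ 10 ^ 8 * (wdeg N x v + 0.02) :=
        edeg_good_le (A ∩ S) (fun v => 10 ^ 8 * (wdeg N x v + 0.02))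
          (fun u => by linarith [hn0 u]) v
      have ha : ∑ e ∈ Cr.filter (· ∈ MM A), (if v ∈ e then 1 / 1.02 * α e else 0)
          ≤ 1 / 1.02 * (1 - wdeg N x v) := by
        have h5 : ∑ e ∈ Cr.filter (· ∈ MM A), (if v ∈ e then 1 / 1.02 * α e else 0)
            ≤ ∑ e ∈ MM A, 1 / 1.02 * (1 - wdeg N x v) * (if v ∈ e then 1 else 0) := by
          refine le_trans (Finset.sum_le_sum fun e _ => ?_)
            (Finset.sum_le_sum_of_subset_of_nonneg hMsub fun e _ _ => ?_)
          · split_ifs with hv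
            · linarith [hαn e v hv]
            · simp
          · split_ifs
            · linarith [hn1 v]
            · simp
        rw [← Finset.mul_sum] at h5
        nlinarith [matching_degree_le_one (hMM A) v, hn1 v]
      linarith
  have hexp := EX_mono h0 h1 hround
  rw [EX_add, EX_mul, EX_mul, ← hlin, EX_inter hSE _ (fun A => ((good A).card : ℝ)),
    EX_inter hQE _ (fun A => (matchNum A : ℝ)), ← expMatch_eq_EX] at hexp
  have hB : 0.98 * ∑ e ∈ N, x e ≤ 1 / 10 ^ 8 * EX S (fun _ => p) (fun A => ((good A).card : ℝ)) := by
    have hn : 0 ≤ ∑ e ∈ N, x e := Finset.sum_nonneg fun e _ => hx e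
    have h6 := mul_le_mul_of_nonneg_left hScard hp0.le
    have h7 : p * (0.99 * (10 ^ 8 / p * ∑ e ∈ N, x e)) = 0.99 * 10 ^ 8 * ∑ e ∈ N, x e := by
      field_simp
    rw [h7] at h6
    have h8 : 0.99 * (p * S.card) ≤ EX S (fun _ => p) (fun A => ((good A).card : ℝ)) := hsurv
    linarith
  have hA : 0.64 * ∑ e ∈ Cr, x e - 0.32 * ∑ e ∈ N, x e ≤ ∑ e ∈ Cr, α e * x e := by
    have h9 : ∑ v, wdeg N x v = 2 * ∑ e ∈ N, x e :=
      sum_vertices_eq Finset.univ N (fun e he => hE e (hNE he)) (fun _ _ _ _ => Finset.mem_univ _) x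
    have h10 : ∑ e ∈ Cr, (0.64 - ∑ v, if v ∈ e then h v else 0) * x e ≤ ∑ e ∈ Cr, α e * x e :=
      Finset.sum_le_sum fun e _ => mul_le_mul_of_nonneg_right (le_max_right _ _) (hx e)
    have h11 : ∑ e ∈ Cr, (0.64 - ∑ v, if v ∈ e then h v else 0) * x e
        = 0.64 * ∑ e ∈ Cr, x e - ∑ v, h v * wdeg Cr x v := by
      simp_rw [sub_mul, Finset.sum_sub_distrib, ← Finset.mul_sum, wdeg, Finset.mul_sum,
        Finset.sum_mul]
      rw [Finset.sum_comm]
      congr 1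
      exact Finset.sum_congr rfl fun v _ => Finset.sum_congr rfl fun e _ => by
        split_ifs <;> simp
    have h12 : ∑ v, h v * wdeg Cr x v ≤ ∑ v, 0.16 * wdeg N x v := by
      refine Finset.sum_le_sum fun v _ => ?_
      have hs := hsplit v
      rcases max_cases 0 (wdeg N x v - 0.36) with ⟨hm, _⟩ | ⟨hm, hm'⟩
      · have : h v = 0 := hm
        rw [this, zero_mul]; linarith [hn0 v]
      · have h13 : h v = wdeg N x v - 0.36 := hm
        rw [h13]
        have h14 : (wdeg N x v - 0.36) * wdeg Cr x v
            ≤ (wdeg N x v - 0.36) * (1 - wdeg N x v) :=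
          mul_le_mul_of_nonneg_left (by linarith) hm'.le
        -- `(n - 0.36) * (1 - n) ≤ 0.16 * n` is `(n - 0.6)² ≥ 0`
        nlinarith [sq_nonneg (wdeg N x v - 0.6)]
    rw [← Finset.mul_sum, h9] at h12
    linarith
  have hn : 0 ≤ ∑ e ∈ N, x e := Finset.sum_nonneg fun e _ => hx e
  have hc : 0 ≤ ∑ e ∈ Cr, x e := Finset.sum_nonneg fun e _ => hx e
  rw [← hsplit0]
  linarith

theorem stochastic_matching_small_p :
    ∃ C : ℝ, 0 < C ∧ ∃ p0 : ℝ, 0 < p0 ∧ p0 < 1 ∧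
      ∀ (V : Type) [Fintype V] [DecidableEq V] (E : Finset (Sym2 V)),
        EdgeSimple E →
        ∀ p : ℝ, 0 < p → p ≤ p0 →
          ∃ Q : Finset (Sym2 V), Q ⊆ E ∧
            (∀ v : V, (edeg Q v : ℝ) ≤ C * Real.log (1 / p) / p) ∧
            0.52 * expMatch p E ≤ expMatch p Q := by
  refine ⟨10 ^ 9, by norm_num, 1 / 2, by norm_num, by norm_num, ?_⟩
  intro V _ _ E hE p hp0 hp
  obtain ⟨Q, hQE, hdeg, hQ⟩ := exists_subgraph E hE p hp0 (by linarith)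
  refine ⟨Q, hQE, fun v => (hdeg v).trans ?_, hQ⟩
  -- `p ≤ 1 / 2` keeps `log (1 / p)` above `log 2`, which absorbs the constant `3 * 10 ^ 8`
  have h1 : Real.log 2 ≤ Real.log (1 / p) :=
    Real.log_le_log (by norm_num) (by rw [le_div_iff₀ hp0]; linarith)
  have h2 := Real.log_two_gt_d9
  exact div_le_div_of_nonneg_right (by linarith) hp0.le
end
end

section
/- For every finite simple graph G = (V,E) and every p ∈ (0,1), the graph G contains a ⌊1/p⌋-matching (a subgraph in which every vertex has degree at most ⌊1/p⌋) whose number of edges is at least (⌊1/p⌋ − 1)·opt(G), where opt(G) is the expected maximum matching size of a p-realization of G. -/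
/-!
Write `b = ⌊1/p⌋`, so `b * p ≤ 1`. Colour every edge independently, giving it each of `b` colours
with probability `p` and no colour with probability `1 - b * p`. Each colour class is then
distributed as a `p`-realization, so maximum matchings of the `b` classes have expected total size
`b * opt`. The classes are disjoint, so the union of these matchings has exactly that total size,
and each vertex has degree at most one in each matching, hence at most `b` in the union. Some
outcome reaches the mean, which even gives `b * opt` edges.

The existence of that outcome (`exists_disjoint_ge_sum_expSubset`) is derived by the method of
conditional expectations: the edges are coloured one at a time, never decreasing the conditional
expectation.
-/

open scoped Classical symmDiff
open Real

noncomputable section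

/-- The expectation of `f S` when `S` is the random subset of `E` that keeps each element
independently with probability `p`. -/
def expSubset {α : Type*} (p : ℝ) (E : Finset α) (f : Finset α → ℝ) : ℝ :=
  ∑ S ∈ E.powerset, p ^ S.card * (1 - p) ^ (E.card - S.card) * f S

/-- Conditioning the random subset on whether it contains `a`. -/
lemma expSubset_insert {α : Type*} (p : ℝ) {E : Finset α} {a : α} (ha : a ∉ E)
    (f : Finset α → ℝ) :
    expSubset p (insert a E) f
      = p * expSubset p E (fun S => f (insert a S)) + (1 - p) * expSubset p E f := by
  unfold expSubset
  rw [Finset.sum_powerset_insert ha, add_comm, Finset.mul_sum, Finset.mul_sum]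
  congr 1
  · refine Finset.sum_congr rfl fun S hS => ?_
    have haS : a ∉ S := fun h => ha (Finset.mem_powerset.1 hS h)
    rw [Finset.card_insert_of_notMem ha, Finset.card_insert_of_notMem haS,
      Nat.add_sub_add_right]
    ring
  · refine Finset.sum_congr rfl fun S hS => ?_
    have hc : S.card ≤ E.card := Finset.card_le_card (Finset.mem_powerset.1 hS)
    rw [Finset.card_insert_of_notMem ha, Nat.sub_add_comm hc]
    ring

/-- If at most `1/p` functions of a random subset are given, disjoint subsets can be chosen for
them so that the total value is at least the sum of the expectations. -/
lemma exists_disjoint_ge_sum_expSubset {α ι : Type*} [Fintype ι] {p : ℝ} (hp : 0 < p)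
    (hι : (Fintype.card ι : ℝ) * p ≤ 1) (E : Finset α) :
    ∀ f : ι → Finset α → ℝ, ∃ T : ι → Finset α, (∀ i, T i ⊆ E) ∧
      (∀ i j, i ≠ j → Disjoint (T i) (T j)) ∧
      ∑ i, expSubset p E (f i) ≤ ∑ i, f i (T i) := by
  induction E using Finset.induction_on with
  | empty =>
    intro f
    exact ⟨fun _ => ∅, by simp, by simp, by simp [expSubset]⟩
  | insert a E ha ih =>
    intro f
    -- `D i` is the gain in conditional expectation when `a` joins the `i`-th set.
    set D : ι → ℝ := fun i =>
      expSubset p E (fun S => f i (insert a S)) - expSubset p E (f i) with hD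
    have hsum : ∑ i, expSubset p (insert a E) (f i)
        = ∑ i, expSubset p E (f i) + p * ∑ i, D i := by
      rw [Finset.mul_sum, ← Finset.sum_add_distrib]
      refine Finset.sum_congr rfl fun i _ => ?_
      rw [expSubset_insert p ha, hD]
      ring
    by_cases hneg : p * ∑ i, D i ≤ 0
    · obtain ⟨T, hT, hd, hs⟩ := ih f
      exact ⟨T, fun i => (hT i).trans (Finset.subset_insert _ _), hd, by linarith⟩
    · push Not at hneg
      obtain ⟨i, hi⟩ : ∃ i, p * ∑ j, D j ≤ D i := by
        by_contra! hlt
        have hpos : 0 < ∑ j, D j := pos_of_mul_pos_right hneg hp.le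
        obtain ⟨i⟩ : Nonempty ι := by
          by_contra hem
          rw [not_nonempty_iff] at hem
          simp at hpos
        have h2 : ∑ i, D i < ∑ _i : ι, p * ∑ j, D j :=
          Finset.sum_lt_sum (fun i _ => (hlt i).le) ⟨i, Finset.mem_univ i, hlt i⟩
        rw [Finset.sum_const, Finset.card_univ, nsmul_eq_mul, ← mul_assoc] at h2
        nlinarith
      obtain ⟨T, hT, hd, hs⟩ := ih (Function.update f i fun S => f i (insert a S))
      have haT : ∀ j, a ∉ T j := fun j h => ha (hT j h)
      refine ⟨Function.update T i (insert a (T i)), fun j => ?_, fun j k hjk => ?_, ?_⟩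
      · rcases eq_or_ne j i with rfl | hj
        · simpa using Finset.insert_subset_insert a (hT j)
        · simpa [hj] using (hT j).trans (Finset.subset_insert _ _)
      · rcases eq_or_ne j i with rfl | hj
        · simpa [hjk.symm, haT] using hd j k hjk
        · rcases eq_or_ne k i with rfl | hk
          · simpa [hj, haT] using hd j k hjk
          · simpa [hj, hk] using hd j k hjk
      · have e1 : ∑ j, expSubset p E ((Function.update f i fun S => f i (insert a S)) j)
            = ∑ j, expSubset p E (f j) + D i := by
          rw [← sub_eq_iff_eq_add', ← Finset.sum_sub_distrib, Finset.sum_eq_single i]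
          · simp [hD]
          · intro j _ hj
            simp [hj]
          · simp
        have e2 : ∑ j, (Function.update f i fun S => f i (insert a S)) j (T j)
            = ∑ j, f j (Function.update T i (insert a (T i)) j) := by
          refine Finset.sum_congr rfl fun j _ => ?_
          rcases eq_or_ne j i with rfl | hj
          · simp
          · simp [hj]
        rw [hsum, ← e2]
        linarith

lemma exists_matching_card_eq_matchNum {V : Type*} (E : Finset (Sym2 V)) :
    ∃ M ⊆ E, IsMatchingSet M ∧ M.card = matchNum E := by
  have hne : (E.powerset.filter fun M => IsMatchingSet M).Nonempty :=
    ⟨∅, Finset.mem_filter.2 ⟨Finset.empty_mem_powerset E, by simp [IsMatchingSet]⟩⟩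
  obtain ⟨M, hM, h⟩ := Finset.exists_mem_eq_sup _ hne Finset.card
  rw [Finset.mem_filter, Finset.mem_powerset] at hM
  exact ⟨M, hM.1, hM.2, h.symm⟩

lemma IsMatchingSet.edeg_le_one {V : Type*} {M : Finset (Sym2 V)} (hM : IsMatchingSet M) (v : V) :
    edeg M v ≤ 1 := by
  refine Finset.card_le_one.2 fun e he f hf => ?_
  rw [Finset.mem_filter] at he hf
  by_contra hef
  exact hM.2 e he.1 f hf.1 hef v he.2 hf.2

/-- As long as `b * p ≤ 1`, some `b`-matching has at least `b * opt` edges. -/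
lemma exists_bMatching_card_ge {V : Type*} (E : Finset (Sym2 V)) {p : ℝ} (hp : 0 < p) {b : ℕ}
    (hb : (b : ℝ) * p ≤ 1) :
    ∃ B ⊆ E, (∀ v, edeg B v ≤ b) ∧ (b : ℝ) * expMatch p E ≤ B.card := by
  obtain ⟨T, hT, hd, hs⟩ := exists_disjoint_ge_sum_expSubset (ι := Fin b) hp (by simpa using hb) E
    fun _ S => (matchNum S : ℝ)
  choose M hMT hM hcard using fun i => exists_matching_card_eq_matchNum (T i)
  refine ⟨Finset.univ.biUnion M, ?_, fun v => ?_, ?_⟩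
  · exact Finset.biUnion_subset.2 fun i _ => (hMT i).trans (hT i)
  · unfold edeg
    rw [Finset.filter_biUnion]
    refine Finset.card_biUnion_le.trans ?_
    calc ∑ i, ((M i).filter fun e => v ∈ e).card ≤ ∑ _i : Fin b, 1 :=
          Finset.sum_le_sum fun i _ => (hM i).edeg_le_one v
      _ = b := by simp
  · rw [Finset.card_biUnion fun i _ j _ hij =>
      Finset.disjoint_of_subset_left (hMT i) (Finset.disjoint_of_subset_right (hMT j) (hd i j hij))]
    simp only [hcard]
    push_cast
    simpa [expSubset, expMatch] using hs

theorem b_matching_lemma {V : Type*} [Fintype V] [DecidableEq V]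
    (E : Finset (Sym2 V)) (hE : EdgeSimple E)
    (p : ℝ) (hp : 0 < p) (hp1 : p < 1) :
    ∃ B : Finset (Sym2 V), B ⊆ E ∧
      (∀ v : V, edeg B v ≤ ⌊1 / p⌋₊) ∧
      ((⌊1 / p⌋₊ : ℝ) - 1) * expMatch p E ≤ (B.card : ℝ) := by
  have hb : (⌊1 / p⌋₊ : ℝ) * p ≤ 1 :=
    (le_div_iff₀ hp).1 (Nat.floor_le (by positivity))
  obtain ⟨B, hBE, hdeg, hcard⟩ := exists_bMatching_card_ge E hp hb
  have hopt : 0 ≤ expMatch p E := by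
    have : 0 ≤ 1 - p := by linarith
    exact Finset.sum_nonneg fun S _ => by positivity
  exact ⟨B, hBE, hdeg, by linarith⟩
end
end

section
/- For every constant p ∈ (0,1) and every ε > 0, there exists n0 such that for every n ≥ n0 there is a bipartite simple graph G with n vertices on each side with the following two properties: (i) the expected maximum matching size of a p-realization of G is at least (1 − ε)·n; and (ii) for every b ≥ 2/p, G contains no b-matching with at least 0.99·b·n edges. -/
/-!
Let `k = ⌈1 / (8 p)⌉`. Each side of the graph consists of `t * k` core vertices and `a` auxiliary
vertices. The core vertices span `t` disjoint copies of `K_{k,k}`, and every auxiliary vertex is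
joined to all core vertices of the opposite side. The number `d = t * k - a` is chosen to be about
`0.7 * (k p) * (t * k)`.

*No large `b`-matching.* At most `2 * a * b` edges of a `b`-matching touch an auxiliary vertex
(`card_bMatching_le`), and there are only `t * k ^ 2 ≤ b * (k p) * (t * k) / 2` core edges, because
`1 ≤ b p / 2`. Since `2 a = n - d` and `d` exceeds `(k p) * (t * k) / 2` by more than `0.01 n`, the
total is below `0.99 b n` (`bMatching_arith`).

*Large realized matching.* Call a core edge isolated if it is kept and all core edges adjacent to
it are deleted. Isolated core edges form a matching, and their expected number is at least
`0.75 * (k p) * (t * k)` (`isoMean_ge`). Distinct blocks are independent, so the variance is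
`O(t)`, and by Chebyshev's inequality at least `d` core edges are isolated with probability close
to `1`. Then `d` of them leave exactly `a` core vertices uncovered on each side. By a union bound,
with probability close to `1` any two sets of `s = Θ(n)` vertices completely joined by auxiliary
edges span a realized edge, so the uncovered core vertices can be matched greedily to the auxiliary
vertices of the other side with a loss of at most `s` on either side (`matching_of_good`). This
gives a matching of size at least `d + 2 (a - s) = n - 2 s` (`expMatch_ge`).
-/

open scoped Classical symmDiff
open Real

noncomputable section

/-! ### Random subsets of a finite set -/

section Probability

variable {α : Type*}

/-- The probability that a `p`-realization of the finite ground set `E` is exactly `S ⊆ E`. -/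
def bw (p : ℝ) (E S : Finset α) : ℝ := p ^ S.card * (1 - p) ^ (E.card - S.card)

lemma bw_nonneg {p : ℝ} (hp : 0 < p) (hp1 : p < 1) (E S : Finset α) : 0 ≤ bw p E S :=
  mul_nonneg (pow_nonneg hp.le _) (pow_nonneg (by linarith) _)

variable [DecidableEq α]

/-- The basic cylinder event: all of `A` is kept and all of `C` is deleted. -/
lemma bw_event (p : ℝ) {E A C : Finset α} (hA : A ⊆ E) (hC : C ⊆ E) (hAC : Disjoint A C) :
    ∑ S ∈ E.powerset, bw p E S * (if A ⊆ S ∧ Disjoint C S then 1 else 0)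
      = p ^ A.card * (1 - p) ^ C.card := by
  -- Expand `∏ (f i + g i)`, where `f` and `g` carry the indicators of the two constraints.
  have key := Finset.prod_add (fun i => if i ∈ C then 0 else p)
    (fun i => if i ∈ A then 0 else 1 - p) E
  have hl : ∏ i ∈ E, ((if i ∈ C then 0 else p) + (if i ∈ A then 0 else 1 - p))
      = p ^ A.card * (1 - p) ^ C.card := by
    have h1 : ∀ i ∈ E, ((if i ∈ C then 0 else p) + (if i ∈ A then 0 else 1 - p))
        = (if i ∈ A then p else 1) * (if i ∈ C then 1 - p else 1) := by
      intro i _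
      by_cases ha : i ∈ A
      · have hc : i ∉ C := Finset.disjoint_left.mp hAC ha
        simp [ha, hc]
      · by_cases hc : i ∈ C <;> simp [ha, hc]
    rw [Finset.prod_congr rfl h1, Finset.prod_mul_distrib, Finset.prod_ite_mem,
      Finset.prod_ite_mem, Finset.inter_eq_right.mpr hA, Finset.inter_eq_right.mpr hC]
    simp
  rw [← hl, key]
  refine Finset.sum_congr rfl fun S hS => ?_
  rw [Finset.mem_powerset] at hS
  by_cases hAS : A ⊆ S
  · by_cases hCS : Disjoint C S
    · have e1 : ∏ i ∈ S, (if i ∈ C then 0 else p) = p ^ S.card := by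
        rw [Finset.prod_congr rfl (g := fun _ => p)]
        · simp
        · intro i hi
          simp [Finset.disjoint_right.mp hCS hi]
      have e2 : ∏ i ∈ E \ S, (if i ∈ A then 0 else 1 - p) = (1 - p) ^ (E.card - S.card) := by
        rw [Finset.prod_congr rfl (g := fun _ => 1 - p)]
        · simp [Finset.card_sdiff_of_subset hS]
        · intro i hi
          have : i ∉ A := fun h => (Finset.mem_sdiff.mp hi).2 (hAS h)
          simp [this]
      rw [e1, e2, if_pos ⟨hAS, hCS⟩, bw, mul_one]
    · obtain ⟨i, hiC, hiS⟩ := Finset.not_disjoint_iff.mp hCS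
      rw [Finset.prod_eq_zero hiS (by simp [hiC])]
      simp [hCS]
  · obtain ⟨i, hiA, hiS⟩ := Finset.not_subset.mp hAS
    rw [Finset.prod_eq_zero (Finset.mem_sdiff.mpr ⟨hA hiA, hiS⟩) (by simp [hiA])]
    simp [hAS]

lemma bw_sum (p : ℝ) (E : Finset α) : ∑ S ∈ E.powerset, bw p E S = 1 := by
  have h := bw_event p (E := E) (Finset.empty_subset _) (Finset.empty_subset _)
    (Finset.disjoint_empty_right ∅)
  simpa using h

/-- Union bound: some member of a family of `c`-element sets is entirely deleted. -/
lemma bw_union_bound {p : ℝ} (hp : 0 < p) (hp1 : p < 1) {E : Finset α} {ι : Type*}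
    (J : Finset ι) (C : ι → Finset α) (c : ℕ) (hC : ∀ i ∈ J, C i ⊆ E)
    (hc : ∀ i ∈ J, (C i).card = c) :
    ∑ S ∈ E.powerset, bw p E S * (if ∃ i ∈ J, Disjoint (C i) S then 1 else 0)
      ≤ J.card * (1 - p) ^ c := by
  calc _ ≤ ∑ S ∈ E.powerset, ∑ i ∈ J,
          bw p E S * (if (∅ : Finset α) ⊆ S ∧ Disjoint (C i) S then 1 else 0) := by
        refine Finset.sum_le_sum fun S _ => ?_
        rw [← Finset.mul_sum]
        refine mul_le_mul_of_nonneg_left ?_ (bw_nonneg hp hp1 E S)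
        split_ifs with h
        · obtain ⟨i, hi, hd⟩ := h
          refine le_trans ?_ (Finset.single_le_sum (fun j _ => ?_) hi)
          · simp [hd]
          · split_ifs <;> norm_num
        · refine Finset.sum_nonneg fun j _ => ?_
          split_ifs <;> norm_num
    _ = ∑ i ∈ J, (1 - p) ^ c := by
        rw [Finset.sum_comm]
        refine Finset.sum_congr rfl fun i hi => ?_
        rw [bw_event p (Finset.empty_subset _) (hC i hi) (Finset.disjoint_empty_left _), hc i hi]
        simp
    _ = _ := by simp

/-- Chebyshev's inequality for the lower tail, for a finitely supported distribution `w`. -/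
lemma chebyshev_lower {Ω : Type*} (s : Finset Ω) (w X : Ω → ℝ) (hw : ∀ x ∈ s, 0 ≤ w x)
    (h1 : ∑ x ∈ s, w x = 1) (μ V d : ℝ) (hμ : ∑ x ∈ s, w x * X x = μ)
    (hV : ∑ x ∈ s, w x * X x ^ 2 ≤ μ ^ 2 + V) (hd : d < μ) :
    ∑ x ∈ s, w x * (if X x < d then 1 else 0) ≤ V / (μ - d) ^ 2 := by
  have hpos : 0 < (μ - d) ^ 2 := pow_pos (by linarith) 2
  rw [le_div_iff₀ hpos, Finset.sum_mul]
  have e : ∑ x ∈ s, w x * (X x - μ) ^ 2 = ∑ x ∈ s, w x * X x ^ 2 - μ ^ 2 := by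
    have : ∀ x ∈ s, w x * (X x - μ) ^ 2
        = w x * X x ^ 2 - 2 * μ * (w x * X x) + μ ^ 2 * w x := fun x _ => by ring
    rw [Finset.sum_congr rfl this, Finset.sum_add_distrib, Finset.sum_sub_distrib,
      ← Finset.mul_sum, ← Finset.mul_sum, hμ, h1]
    ring
  calc _ ≤ ∑ x ∈ s, w x * (X x - μ) ^ 2 := by
        refine Finset.sum_le_sum fun x hx => ?_
        rw [mul_assoc]
        refine mul_le_mul_of_nonneg_left ?_ (hw x hx)
        split_ifs with h
        · nlinarith
        · simpa using sq_nonneg _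
    _ ≤ V := by linarith

/-- Let `X` count the events that `A e` is kept and `C e` is deleted, where events in different
blocks depend on disjoint sets of elements. Then the variance of `X` is at most the number of
ordered pairs of events in a common block. -/
lemma bw_second_moment {p : ℝ} (hp : 0 < p) (hp1 : p < 1) {E : Finset α} {ι κ : Type*}
    [Fintype ι] [DecidableEq κ] (A C : ι → Finset α) (blk : ι → κ)
    (hA : ∀ e, A e ⊆ E) (hC : ∀ e, C e ⊆ E) (hAC : ∀ e, Disjoint (A e) (C e))
    (hblk : ∀ e f, blk e ≠ blk f → Disjoint (A e ∪ C e) (A f ∪ C f)) :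
    ∑ S ∈ E.powerset, bw p E S *
        (∑ e, if A e ⊆ S ∧ Disjoint (C e) S then (1 : ℝ) else 0) ^ 2
      ≤ (∑ e, p ^ (A e).card * (1 - p) ^ (C e).card) ^ 2
        + ((Finset.univ.filter fun z : ι × ι => blk z.1 = blk z.2).card : ℝ) := by
  have hq : (0 : ℝ) ≤ 1 - p := by linarith
  have hexp : ∀ S, (∑ e, if A e ⊆ S ∧ Disjoint (C e) S then (1 : ℝ) else 0) ^ 2
      = ∑ e, ∑ f, if A e ∪ A f ⊆ S ∧ Disjoint (C e ∪ C f) S then (1 : ℝ) else 0 := by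
    intro S
    rw [sq, Finset.sum_mul_sum]
    refine Finset.sum_congr rfl fun e _ => Finset.sum_congr rfl fun f _ => ?_
    simp only [Finset.union_subset_iff, Finset.disjoint_union_left]
    by_cases h1 : A e ⊆ S <;> by_cases h2 : A f ⊆ S <;> by_cases h3 : Disjoint (C e) S <;>
      by_cases h4 : Disjoint (C f) S <;> simp [h1, h2, h3, h4]
  have hpair : ∀ e f, ∑ S ∈ E.powerset, bw p E S *
        (if A e ∪ A f ⊆ S ∧ Disjoint (C e ∪ C f) S then (1 : ℝ) else 0)
      ≤ (p ^ (A e).card * (1 - p) ^ (C e).card) * (p ^ (A f).card * (1 - p) ^ (C f).card)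
        + (if blk e = blk f then 1 else 0) := by
    intro e f
    by_cases h : blk e = blk f
    · rw [if_pos h]
      have : ∑ S ∈ E.powerset, bw p E S *
          (if A e ∪ A f ⊆ S ∧ Disjoint (C e ∪ C f) S then (1 : ℝ) else 0) ≤ 1 := by
        refine le_trans ?_ (bw_sum p E).le
        refine Finset.sum_le_sum fun S _ => ?_
        have := bw_nonneg hp hp1 E S
        split_ifs <;> simp [this]
      have h2 : 0 ≤ (p ^ (A e).card * (1 - p) ^ (C e).card) *
          (p ^ (A f).card * (1 - p) ^ (C f).card) := by positivity
      linarith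
    · have hd := hblk e f h
      rw [Finset.disjoint_union_left, Finset.disjoint_union_right,
        Finset.disjoint_union_right] at hd
      obtain ⟨⟨h1, h2⟩, h3, h4⟩ := hd
      rw [bw_event p (Finset.union_subset (hA e) (hA f)) (Finset.union_subset (hC e) (hC f)),
        Finset.card_union_of_disjoint h1, Finset.card_union_of_disjoint h4, if_neg h]
      · exact le_of_eq (by ring)
      · rw [Finset.disjoint_union_left, Finset.disjoint_union_right, Finset.disjoint_union_right]
        exact ⟨⟨hAC e, h2⟩, h3.symm, hAC f⟩
  calc _ = ∑ e, ∑ f, ∑ S ∈ E.powerset, bw p E S *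
        (if A e ∪ A f ⊆ S ∧ Disjoint (C e ∪ C f) S then (1 : ℝ) else 0) := by
        simp_rw [hexp, Finset.mul_sum]
        rw [Finset.sum_comm]
        exact Finset.sum_congr rfl fun e _ => Finset.sum_comm
    _ ≤ ∑ e, ∑ f, ((p ^ (A e).card * (1 - p) ^ (C e).card) *
          (p ^ (A f).card * (1 - p) ^ (C f).card) + (if blk e = blk f then 1 else 0)) :=
        Finset.sum_le_sum fun e _ => Finset.sum_le_sum fun f _ => hpair e f
    _ = _ := by
        simp_rw [Finset.sum_add_distrib]
        rw [sq, Finset.sum_mul_sum, ← Fintype.sum_prod_type'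
          (f := fun e f => if blk e = blk f then (1 : ℝ) else 0), Finset.sum_boole]

end Probability

/-! ### Bipartite matchings as sets of pairs -/

section Matchings

variable {α β : Type*}

/-- A matching in a bipartite graph, its edges being given as pairs (left end, right end). -/
def PairMatching (M : Finset (α × β)) : Prop :=
  Set.InjOn Prod.fst (M : Set (α × β)) ∧ Set.InjOn Prod.snd (M : Set (α × β))

lemma PairMatching.mono {M N : Finset (α × β)} (h : PairMatching M) (hN : N ⊆ M) :
    PairMatching N :=
  ⟨h.1.mono (Finset.coe_subset.mpr hN), h.2.mono (Finset.coe_subset.mpr hN)⟩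

/-- The edge of the bipartite graph on `Fin n ⊕ Fin n` given by a pair of vertices, after
relabelling both sides along `φ`. -/
def toEdge {n : ℕ} (φ : α ≃ Fin n) (z : α × α) : Sym2 (Fin n ⊕ Fin n) :=
  s(Sum.inl (φ z.1), Sum.inr (φ z.2))

lemma toEdge_injective {n : ℕ} (φ : α ≃ Fin n) : Function.Injective (toEdge φ) := by
  rintro ⟨a, b⟩ ⟨c, d⟩ h
  simpa [toEdge] using h

lemma inl_mem_toEdge {n : ℕ} (φ : α ≃ Fin n) (z : α × α) (i : Fin n) :
    Sum.inl i ∈ toEdge φ z ↔ i = φ z.1 := by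
  simp [toEdge]

lemma inr_mem_toEdge {n : ℕ} (φ : α ≃ Fin n) (z : α × α) (i : Fin n) :
    Sum.inr i ∈ toEdge φ z ↔ i = φ z.2 := by
  simp [toEdge]

lemma card_le_matchNum_s3 {n : ℕ} (φ : α ≃ Fin n) {M S : Finset (α × α)} (hMS : M ⊆ S)
    (hM : PairMatching M) : M.card ≤ matchNum (S.image (toEdge φ)) := by
  rw [← Finset.card_image_of_injective M (toEdge_injective φ)]
  refine Finset.le_sup (f := Finset.card) ?_
  rw [Finset.mem_filter, Finset.mem_powerset]
  refine ⟨Finset.image_subset_image hMS, ?_, ?_⟩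
  · intro e he
    obtain ⟨z, _, rfl⟩ := Finset.mem_image.mp he
    simp [toEdge]
  · intro e he f hf hef v hve hvf
    obtain ⟨z, hz, rfl⟩ := Finset.mem_image.mp he
    obtain ⟨w, hw, rfl⟩ := Finset.mem_image.mp hf
    apply hef
    rcases v with i | i
    · rw [inl_mem_toEdge] at hve hvf
      rw [hM.1 hz hw (φ.injective (hve.symm.trans hvf))]
    · rw [inr_mem_toEdge] at hve hvf
      rw [hM.2 hz hw (φ.injective (hve.symm.trans hvf))]

lemma expMatch_image {n : ℕ} (p : ℝ) (φ : α ≃ Fin n) (E : Finset (α × α)) :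
    expMatch p (E.image (toEdge φ))
      = ∑ S ∈ E.powerset, bw p E S * (matchNum (S.image (toEdge φ)) : ℝ) := by
  unfold expMatch
  rw [Finset.powerset_image, Finset.sum_image]
  · simp only [Finset.card_image_of_injective _ (toEdge_injective φ), bw]
  · exact (Finset.image_injective (toEdge_injective φ)).injOn

variable [DecidableEq α] [DecidableEq β]

lemma PairMatching.union {M N : Finset (α × β)} (hM : PairMatching M) (hN : PairMatching N)
    (h : ∀ x ∈ M, ∀ y ∈ N, x.1 ≠ y.1 ∧ x.2 ≠ y.2) :
    PairMatching (M ∪ N) ∧ (M ∪ N).card = M.card + N.card := by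
  refine ⟨⟨?_, ?_⟩, ?_⟩
  · intro x hx y hy hxy
    simp only [Finset.coe_union, Set.mem_union, Finset.mem_coe] at hx hy
    rcases hx with hx | hx <;> rcases hy with hy | hy
    · exact hM.1 hx hy hxy
    · exact absurd hxy (h x hx y hy).1
    · exact absurd hxy.symm (h y hy x hx).1
    · exact hN.1 hx hy hxy
  · intro x hx y hy hxy
    simp only [Finset.coe_union, Set.mem_union, Finset.mem_coe] at hx hy
    rcases hx with hx | hx <;> rcases hy with hy | hy
    · exact hM.2 hx hy hxy
    · exact absurd hxy (h x hx y hy).2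
    · exact absurd hxy.symm (h y hy x hx).2
    · exact hN.2 hx hy hxy
  · refine Finset.card_union_of_disjoint (Finset.disjoint_left.mpr fun x hx hx' => ?_)
    exact (h x hx x hx').1 rfl

/-- If any two `s`-subsets of `U` and `W` span an edge of `S`, then growing a matching greedily
gets stuck only when fewer than `s` vertices of `U` or of `W` are left. -/
lemma greedy_matching (S : Finset (α × β)) (U : Finset α) (W : Finset β) (s : ℕ)
    (h : ∀ U' ⊆ U, ∀ W' ⊆ W, U'.card = s → W'.card = s → ∃ x ∈ U', ∃ y ∈ W', (x, y) ∈ S) :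
    ∀ j, j + s ≤ U.card → j + s ≤ W.card →
      ∃ M ⊆ S, M ⊆ U ×ˢ W ∧ PairMatching M ∧ M.card = j := by
  intro j
  induction j with
  | zero =>
    intro _ _
    exact ⟨∅, by simp, by simp, by simp [PairMatching], by simp⟩
  | succ j ih =>
    intro hU hW
    obtain ⟨M, hMS, hMUW, hM, hcard⟩ := ih (by omega) (by omega)
    have c1 : s ≤ (U \ M.image Prod.fst).card := by
      have h1 := Finset.le_card_sdiff (M.image Prod.fst) U
      have h2 := Finset.card_image_le (s := M) (f := Prod.fst)
      omega
    have c2 : s ≤ (W \ M.image Prod.snd).card := by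
      have h1 := Finset.le_card_sdiff (M.image Prod.snd) W
      have h2 := Finset.card_image_le (s := M) (f := Prod.snd)
      omega
    obtain ⟨U', hU', hU'c⟩ := Finset.exists_subset_card_eq c1
    obtain ⟨W', hW', hW'c⟩ := Finset.exists_subset_card_eq c2
    obtain ⟨x, hx, y, hy, hxy⟩ := h U' (hU'.trans Finset.sdiff_subset) W'
      (hW'.trans Finset.sdiff_subset) hU'c hW'c
    have hx' := Finset.mem_sdiff.mp (hU' hx)
    have hy' := Finset.mem_sdiff.mp (hW' hy)
    have hu := hM.union (N := {(x, y)}) (by simp [PairMatching]) (by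
      intro z hz w hw
      rw [Finset.mem_singleton] at hw
      subst hw
      exact ⟨fun e => hx'.2 (Finset.mem_image.mpr ⟨z, hz, e⟩),
        fun e => hy'.2 (Finset.mem_image.mpr ⟨z, hz, e⟩)⟩)
    refine ⟨M ∪ {(x, y)}, ?_, ?_, hu.1, ?_⟩
    · exact Finset.union_subset hMS (by simpa using hxy)
    · exact Finset.union_subset hMUW (by simpa using ⟨hx'.1, hy'.1⟩)
    · rw [hu.2, hcard, Finset.card_singleton]

end Matchings

/-! ### The graph: blocks and auxiliary vertices -/

section Construction

/-- Each side of the graph: `t` blocks of `k` core vertices, and `a` auxiliary vertices. -/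
abbrev Side (t k a : ℕ) := (Fin t × Fin k) ⊕ Fin a

variable {t k a : ℕ}

/-- The core edge in block `e.1` joining the left vertex `e.2.1` to the right vertex `e.2.2`. -/
def coreEdge (a : ℕ) (e : Fin t × Fin k × Fin k) : Side t k a × Side t k a :=
  (Sum.inl (e.1, e.2.1), Sum.inl (e.1, e.2.2))

lemma coreEdge_injective : Function.Injective (coreEdge a : Fin t × Fin k × Fin k → _) := by
  rintro ⟨c, x, y⟩ ⟨c', x', y'⟩ h
  simp only [coreEdge, Prod.mk.injEq, Sum.inl.injEq] at h ⊢
  tauto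

/-- The core vertices of a side. -/
def coreV (t k a : ℕ) : Finset (Side t k a) := Finset.univ.image Sum.inl

/-- The auxiliary vertices of a side. -/
def auxV (t k a : ℕ) : Finset (Side t k a) := Finset.univ.image Sum.inr

/-- The core edges: `t` disjoint copies of `K_{k,k}`. -/
def coreE (t k a : ℕ) : Finset (Side t k a × Side t k a) := Finset.univ.image (coreEdge a)

/-- The dense edges: every auxiliary vertex is joined to every core vertex of the other side. -/
def denseE (t k a : ℕ) : Finset (Side t k a × Side t k a) :=
  auxV t k a ×ˢ coreV t k a ∪ coreV t k a ×ˢ auxV t k a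

/-- The edge set of the extremal graph. -/
def allE (t k a : ℕ) : Finset (Side t k a × Side t k a) := coreE t k a ∪ denseE t k a

lemma card_coreV : (coreV t k a).card = t * k := by
  rw [coreV, Finset.card_image_of_injective _ Sum.inl_injective]
  simp

lemma card_auxV : (auxV t k a).card = a := by
  rw [auxV, Finset.card_image_of_injective _ Sum.inr_injective]
  simp

lemma card_coreE : (coreE t k a).card = t * (k * k) := by
  rw [coreE, Finset.card_image_of_injective _ coreEdge_injective]
  simp

/-- The auxiliary vertices carry at most `2 * a * b` edges of a `b`-matching, and every
other edge is a core edge. -/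
lemma card_bMatching_le {n : ℕ} (φ : Side t k a ≃ Fin n) (b : ℕ)
    (B : Finset (Sym2 (Fin n ⊕ Fin n))) (hB : B ⊆ (allE t k a).image (toEdge φ))
    (hdeg : ∀ v, edeg B v ≤ b) : B.card ≤ 2 * a * b + t * (k * k) := by
  have hsub : B ⊆ (((auxV t k a).biUnion fun v => B.filter fun e => Sum.inl (φ v) ∈ e) ∪
      ((auxV t k a).biUnion fun v => B.filter fun e => Sum.inr (φ v) ∈ e)) ∪
      (coreE t k a).image (toEdge φ) := by
    intro e he
    obtain ⟨z, hz, rfl⟩ := Finset.mem_image.mp (hB he)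
    simp only [Finset.mem_union, Finset.mem_biUnion, Finset.mem_filter, inl_mem_toEdge,
      inr_mem_toEdge]
    simp only [allE, denseE, Finset.mem_union, Finset.mem_product] at hz
    rcases hz with hz | ⟨hz, _⟩ | ⟨_, hz⟩
    · exact Or.inr (Finset.mem_image_of_mem _ hz)
    · exact Or.inl (Or.inl ⟨z.1, hz, he, rfl⟩)
    · exact Or.inl (Or.inr ⟨z.2, hz, he, rfl⟩)
  have h1 : ((auxV t k a).biUnion fun v => B.filter fun e => Sum.inl (φ v) ∈ e).card ≤ a * b := by
    have := Finset.card_biUnion_le_card_mul (auxV t k a)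
      (fun v => B.filter fun e => Sum.inl (φ v) ∈ e) b
      (fun v _ => by have := hdeg (Sum.inl (φ v)); unfold edeg at this; convert this)
    rwa [card_auxV] at this
  have h2 : ((auxV t k a).biUnion fun v => B.filter fun e => Sum.inr (φ v) ∈ e).card ≤ a * b := by
    have := Finset.card_biUnion_le_card_mul (auxV t k a)
      (fun v => B.filter fun e => Sum.inr (φ v) ∈ e) b
      (fun v _ => by have := hdeg (Sum.inr (φ v)); unfold edeg at this; convert this)
    rwa [card_auxV] at this
  have h3 : ((coreE t k a).image (toEdge φ)).card = t * (k * k) := by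
    rw [Finset.card_image_of_injective _ (toEdge_injective φ), card_coreE]
  have h4 := Finset.card_le_card hsub
  have h5 := Finset.card_union_le
    (((auxV t k a).biUnion fun v => B.filter fun e => Sum.inl (φ v) ∈ e) ∪
      ((auxV t k a).biUnion fun v => B.filter fun e => Sum.inr (φ v) ∈ e))
    ((coreE t k a).image (toEdge φ))
  have h6 := Finset.card_union_le
    ((auxV t k a).biUnion fun v => B.filter fun e => Sum.inl (φ v) ∈ e)
    ((auxV t k a).biUnion fun v => B.filter fun e => Sum.inr (φ v) ∈ e)
  have h7 : 2 * a * b = a * b + a * b := by ring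
  omega

/-! ### Isolated core edges and the realized matching -/

/-- The core edges sharing exactly one endpoint with the core edge `e`. -/
def coreNbr (a : ℕ) (e : Fin t × Fin k × Fin k) : Finset (Side t k a × Side t k a) :=
  (Finset.univ.erase e.2.1).image (fun x => coreEdge a (e.1, x, e.2.2)) ∪
    (Finset.univ.erase e.2.2).image (fun y => coreEdge a (e.1, e.2.1, y))

lemma card_coreNbr_le (e : Fin t × Fin k × Fin k) : (coreNbr a e).card ≤ 2 * (k - 1) := by
  have h1 := Finset.card_union_le
    ((Finset.univ.erase e.2.1).image (fun x => coreEdge a (e.1, x, e.2.2)))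
    ((Finset.univ.erase e.2.2).image (fun y => coreEdge a (e.1, e.2.1, y)))
  have h2 := Finset.card_image_le (s := Finset.univ.erase e.2.1)
    (f := fun x => coreEdge a (e.1, x, e.2.2))
  have h3 := Finset.card_image_le (s := Finset.univ.erase e.2.2)
    (f := fun y => coreEdge a (e.1, e.2.1, y))
  rw [Finset.card_erase_of_mem (Finset.mem_univ _), Finset.card_univ, Fintype.card_fin] at h2 h3
  unfold coreNbr
  omega

/-- The core edge `e` is isolated in `S`: it is kept and all core edges adjacent to it are
deleted. -/
def CoreIso (a : ℕ) (e : Fin t × Fin k × Fin k) (S : Finset (Side t k a × Side t k a)) : Prop :=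
  {coreEdge a e} ⊆ S ∧ Disjoint (coreNbr a e) S

lemma coreEdge_mem_coreE (e : Fin t × Fin k × Fin k) : coreEdge a e ∈ coreE t k a :=
  Finset.mem_image_of_mem _ (Finset.mem_univ _)

lemma coreNbr_subset (e : Fin t × Fin k × Fin k) : coreNbr a e ⊆ coreE t k a := by
  intro z hz
  simp only [coreNbr, Finset.mem_union, Finset.mem_image] at hz
  rcases hz with ⟨x, _, rfl⟩ | ⟨x, _, rfl⟩ <;> exact coreEdge_mem_coreE _

lemma coreE_subset : coreE t k a ⊆ allE t k a := Finset.subset_union_left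

lemma coreEdge_disjoint_coreNbr (e : Fin t × Fin k × Fin k) :
    Disjoint {coreEdge a e} (coreNbr a e) := by
  rw [Finset.disjoint_singleton_left]
  obtain ⟨c, x, y⟩ := e
  simp [coreNbr, coreEdge]

lemma core_blocks_disjoint (e f : Fin t × Fin k × Fin k) (h : e.1 ≠ f.1) :
    Disjoint ({coreEdge a e} ∪ coreNbr a e) ({coreEdge a f} ∪ coreNbr a f) := by
  have key : ∀ (g : Fin t × Fin k × Fin k), ∀ z ∈ {coreEdge a g} ∪ coreNbr a g,
      ∃ x, z.1 = Sum.inl (g.1, x) := by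
    intro g z hz
    simp only [coreNbr, Finset.mem_union, Finset.mem_image, Finset.mem_singleton] at hz
    rcases hz with rfl | ⟨x, _, rfl⟩ | ⟨x, _, rfl⟩ <;> exact ⟨_, rfl⟩
  refine Finset.disjoint_left.mpr fun z hz hz' => h ?_
  obtain ⟨x, hx⟩ := key e z hz
  obtain ⟨y, hy⟩ := key f z hz'
  rw [hx] at hy
  simp only [Sum.inl.injEq, Prod.mk.injEq] at hy
  exact hy.1

/-- The isolated core edges of `S`. -/
def isoE (S : Finset (Side t k a × Side t k a)) : Finset (Side t k a × Side t k a) :=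
  (Finset.univ.filter fun e => CoreIso a e S).image (coreEdge a)

lemma card_isoE (S : Finset (Side t k a × Side t k a)) :
    ((isoE S).card : ℝ) = ∑ e : Fin t × Fin k × Fin k,
      if {coreEdge a e} ⊆ S ∧ Disjoint (coreNbr a e) S then (1 : ℝ) else 0 := by
  rw [isoE, Finset.card_image_of_injective _ coreEdge_injective, Finset.sum_boole]
  congr 2
  ext e
  simp [CoreIso]

lemma isoE_subset (S : Finset (Side t k a × Side t k a)) : isoE S ⊆ S := by
  intro z hz
  obtain ⟨e, he, rfl⟩ := Finset.mem_image.mp hz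
  exact (Finset.mem_filter.mp he).2.1 (Finset.mem_singleton_self _)

lemma isoE_matching (S : Finset (Side t k a × Side t k a)) : PairMatching (isoE S) := by
  have key : ∀ e f : Fin t × Fin k × Fin k, CoreIso a e S → CoreIso a f S →
      coreEdge a f ∉ coreNbr a e := fun e f he hf h =>
    Finset.disjoint_left.mp he.2 h (hf.1 (Finset.mem_singleton_self _))
  constructor
  · intro z hz w hw hzw
    obtain ⟨⟨c, x, y⟩, he, rfl⟩ := Finset.mem_image.mp (Finset.mem_coe.mp hz)
    obtain ⟨⟨c', x', y'⟩, hf, rfl⟩ := Finset.mem_image.mp (Finset.mem_coe.mp hw)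
    simp only [coreEdge, Sum.inl.injEq, Prod.mk.injEq] at hzw
    obtain ⟨rfl, rfl⟩ := hzw
    by_contra hne
    refine key _ _ (Finset.mem_filter.mp he).2 (Finset.mem_filter.mp hf).2 ?_
    refine Finset.mem_union_right _ (Finset.mem_image.mpr ⟨y', ?_, rfl⟩)
    rw [Finset.mem_erase]
    exact ⟨fun h => hne (by simp only at h; rw [h]), Finset.mem_univ _⟩
  · intro z hz w hw hzw
    obtain ⟨⟨c, x, y⟩, he, rfl⟩ := Finset.mem_image.mp (Finset.mem_coe.mp hz)
    obtain ⟨⟨c', x', y'⟩, hf, rfl⟩ := Finset.mem_image.mp (Finset.mem_coe.mp hw)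
    simp only [coreEdge, Sum.inl.injEq, Prod.mk.injEq] at hzw
    obtain ⟨rfl, rfl⟩ := hzw
    by_contra hne
    refine key _ _ (Finset.mem_filter.mp he).2 (Finset.mem_filter.mp hf).2 ?_
    refine Finset.mem_union_left _ (Finset.mem_image.mpr ⟨x', ?_, rfl⟩)
    rw [Finset.mem_erase]
    exact ⟨fun h => hne (by simp only at h; rw [h]), Finset.mem_univ _⟩

/-- The pairs of `s`-sets of vertices completely joined by dense edges. -/
def densePairs (t k a s : ℕ) : Finset (Finset (Side t k a) × Finset (Side t k a)) :=
  Finset.univ.filter fun z => z.1.card = s ∧ z.2.card = s ∧ z.1 ×ˢ z.2 ⊆ denseE t k a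

/-- If at least `t * k - a` core edges are isolated, that many of them form a matching leaving
`a` core vertices uncovered on each side; these can be matched greedily to the auxiliary vertices
of the other side, losing at most `s` vertices on either side. -/
lemma matching_of_good {n : ℕ} (φ : Side t k a ≃ Fin n) (S : Finset (Side t k a × Side t k a))
    (s : ℕ) (ha : a ≤ t * k) (hiso : t * k - a ≤ (isoE S).card)
    (hdense : ¬ ∃ z ∈ densePairs t k a s, Disjoint (z.1 ×ˢ z.2) S) :
    t * k + a ≤ matchNum (S.image (toEdge φ)) + 2 * s := by
  obtain ⟨M, hM, hMc⟩ := Finset.exists_subset_card_eq hiso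
  have hMm : PairMatching M := (isoE_matching S).mono hM
  have hMS : M ⊆ S := hM.trans (isoE_subset S)
  have hMcore : ∀ z ∈ M, z.1 ∈ coreV t k a ∧ z.2 ∈ coreV t k a := by
    intro z hz
    obtain ⟨e, _, rfl⟩ := Finset.mem_image.mp (hM hz)
    exact ⟨Finset.mem_image_of_mem _ (Finset.mem_univ _),
      Finset.mem_image_of_mem _ (Finset.mem_univ _)⟩
  by_cases hs : s ≤ a
  · have hfind : ∀ U W : Finset (Side t k a), U ×ˢ W ⊆ denseE t k a →
        ∀ U' ⊆ U, ∀ W' ⊆ W, U'.card = s → W'.card = s → ∃ x ∈ U', ∃ y ∈ W', (x, y) ∈ S := by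
      intro U W hUW U' hU' W' hW' h1 h2
      have : ¬ Disjoint (U' ×ˢ W') S := fun hd => hdense ⟨(U', W'), by
        rw [densePairs, Finset.mem_filter]
        exact ⟨Finset.mem_univ _, h1, h2, (Finset.product_subset_product hU' hW').trans hUW⟩, hd⟩
      obtain ⟨z, hz, hzS⟩ := Finset.not_disjoint_iff.mp this
      rw [Finset.mem_product] at hz
      exact ⟨z.1, hz.1, z.2, hz.2, hzS⟩
    have hdisj : ∀ x ∈ auxV t k a, ∀ y ∈ coreV t k a, x ≠ y := by
      intro x hx y hy
      obtain ⟨x, _, rfl⟩ := Finset.mem_image.mp hx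
      obtain ⟨y, _, rfl⟩ := Finset.mem_image.mp hy
      simp
    have c1 : a ≤ (coreV t k a \ M.image Prod.fst).card := by
      have h1 := Finset.le_card_sdiff (M.image Prod.fst) (coreV t k a)
      have h2 := Finset.card_image_le (s := M) (f := Prod.fst)
      rw [card_coreV] at h1
      omega
    have c2 : a ≤ (coreV t k a \ M.image Prod.snd).card := by
      have h1 := Finset.le_card_sdiff (M.image Prod.snd) (coreV t k a)
      have h2 := Finset.card_image_le (s := M) (f := Prod.snd)
      rw [card_coreV] at h1
      omega
    obtain ⟨M₁, hM₁S, hM₁, hM₁m, hM₁c⟩ := greedy_matching S (auxV t k a)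
      (coreV t k a \ M.image Prod.snd) s
      (hfind _ _ ((Finset.product_subset_product_right Finset.sdiff_subset).trans
        Finset.subset_union_left)) (a - s) (by rw [card_auxV]; omega) (by omega)
    obtain ⟨M₂, hM₂S, hM₂, hM₂m, hM₂c⟩ := greedy_matching S
      (coreV t k a \ M.image Prod.fst) (auxV t k a) s
      (hfind _ _ ((Finset.product_subset_product_left Finset.sdiff_subset).trans
        Finset.subset_union_right)) (a - s) (by omega) (by rw [card_auxV]; omega)
    have u1 := hMm.union hM₁m (by
      intro x hx y hy
      have hy' := Finset.mem_product.mp (hM₁ hy)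
      refine ⟨(hdisj _ hy'.1 _ (hMcore x hx).1).symm, fun h => ?_⟩
      exact (Finset.mem_sdiff.mp hy'.2).2 (Finset.mem_image.mpr ⟨x, hx, h⟩))
    have u2 := u1.1.union hM₂m (by
      intro x hx y hy
      have hy' := Finset.mem_product.mp (hM₂ hy)
      have hy1 := Finset.mem_sdiff.mp hy'.1
      rcases Finset.mem_union.mp hx with hx | hx
      · exact ⟨fun h => hy1.2 (Finset.mem_image.mpr ⟨x, hx, h⟩),
          (hdisj _ hy'.2 _ (hMcore x hx).2).symm⟩
      · have hx' := Finset.mem_product.mp (hM₁ hx)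
        exact ⟨hdisj _ hx'.1 _ hy1.1,
          (hdisj _ hy'.2 _ (Finset.mem_sdiff.mp hx'.2).1).symm⟩)
    have := card_le_matchNum_s3 φ
      (Finset.union_subset (Finset.union_subset hMS hM₁S) hM₂S) u2.1
    rw [u2.2, u1.2] at this
    omega
  · have := card_le_matchNum_s3 φ hMS hMm
    omega

/-- The expected number of isolated core edges. -/
def isoMean (p : ℝ) (t k a : ℕ) : ℝ :=
  ∑ e : Fin t × Fin k × Fin k, p ^ ({coreEdge a e} : Finset (Side t k a × Side t k a)).card
    * (1 - p) ^ (coreNbr a e).card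

/-- By Bernoulli's inequality `(1 - p) ^ (2 * (k - 1)) ≥ 1 - 2 * (k - 1) * p`. -/
lemma isoMean_ge {p : ℝ} (hp : 0 < p) (hp1 : p < 1) (hk : 1 ≤ k)
    (hkp : ((k : ℝ) - 1) * p ≤ 1 / 8) :
    3 / 4 * (k * p) * (t * k) ≤ isoMean p t k a := by
  have h : ∀ e : Fin t × Fin k × Fin k, p * (3 / 4) ≤
      p ^ ({coreEdge a e} : Finset (Side t k a × Side t k a)).card
        * (1 - p) ^ (coreNbr a e).card := by
    intro e
    rw [Finset.card_singleton, pow_one]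
    refine mul_le_mul_of_nonneg_left ?_ hp.le
    calc (3 / 4 : ℝ) ≤ 1 + ((2 * (k - 1) : ℕ) : ℝ) * (-p) := by
          push_cast [Nat.cast_sub hk]
          linarith
      _ ≤ (1 + -p) ^ (2 * (k - 1)) := one_add_mul_le_pow (by linarith) _
      _ = (1 - p) ^ (2 * (k - 1)) := by ring
      _ ≤ _ := pow_le_pow_of_le_one (by linarith) (by linarith) (card_coreNbr_le e)
  calc _ = ∑ e : Fin t × Fin k × Fin k, p * (3 / 4) := by
        simp
        ring
    _ ≤ _ := Finset.sum_le_sum fun e _ => h e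

/-- The expected matching size falls short of `n - 2 * s` by at most `n` times the probability
of the two bad events: two completely joined `s`-sets lose all their edges, or fewer than
`t * k - a` core edges are isolated. -/
lemma expMatch_ge {p : ℝ} (hp : 0 < p) (hp1 : p < 1) (φ : Side t k a ≃ Fin (t * k + a)) (s : ℕ)
    (ha : a ≤ t * k) (hs : 2 * s ≤ t * k + a) (hd : (t * k : ℝ) - a < isoMean p t k a) :
    ((t * k + a : ℝ) - 2 * s) * (1 - 4 ^ (t * k + a) * (1 - p) ^ (s * s)
        - t * k ^ 4 / (isoMean p t k a - (t * k - a)) ^ 2)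
      ≤ expMatch p ((allE t k a).image (toEdge φ)) := by
  have hq : (0 : ℝ) ≤ 1 - p := by linarith
  have hs' : (0 : ℝ) ≤ (t * k + a : ℝ) - 2 * s := by
    have : ((2 * s : ℕ) : ℝ) ≤ ((t * k + a : ℕ) : ℝ) := by exact_mod_cast hs
    push_cast at this
    linarith
  have hbad1 : ∑ S ∈ (allE t k a).powerset, bw p (allE t k a) S *
      (if ∃ z ∈ densePairs t k a s, Disjoint (z.1 ×ˢ z.2) S then 1 else 0)
      ≤ 4 ^ (t * k + a) * (1 - p) ^ (s * s) := by
    refine (bw_union_bound hp hp1 (densePairs t k a s) (fun z => z.1 ×ˢ z.2) (s * s) ?_ ?_).trans ?_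
    · intro z hz
      exact (Finset.mem_filter.mp hz).2.2.2.trans Finset.subset_union_right
    · intro z hz
      obtain ⟨_, h1, h2, _⟩ := Finset.mem_filter.mp hz
      rw [Finset.card_product, h1, h2]
    · refine mul_le_mul_of_nonneg_right ?_ (by positivity)
      have h1 : (densePairs t k a s).card ≤ 4 ^ (t * k + a) := by
        refine (Finset.card_le_univ _).trans (le_of_eq ?_)
        have : Fintype.card (Side t k a) = t * k + a := by simp
        rw [Fintype.card_prod, Fintype.card_finset, this, ← mul_pow]
        norm_num
      exact_mod_cast h1
  have hmean : ∑ S ∈ (allE t k a).powerset, bw p (allE t k a) S * ((isoE S).card : ℝ)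
      = isoMean p t k a := by
    simp_rw [card_isoE, Finset.mul_sum]
    rw [Finset.sum_comm]
    refine Finset.sum_congr rfl fun e _ => ?_
    exact bw_event p
      (Finset.singleton_subset_iff.mpr (coreE_subset (coreEdge_mem_coreE e)))
      ((coreNbr_subset e).trans coreE_subset) (coreEdge_disjoint_coreNbr e)
  have hsec : ∑ S ∈ (allE t k a).powerset, bw p (allE t k a) S * ((isoE S).card : ℝ) ^ 2
      ≤ isoMean p t k a ^ 2 + t * k ^ 4 := by
    simp_rw [card_isoE]
    refine (bw_second_moment hp hp1 (E := allE t k a)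
      (fun e : Fin t × Fin k × Fin k => {coreEdge a e}) (coreNbr a) Prod.fst
      (fun e => Finset.singleton_subset_iff.mpr (coreE_subset (coreEdge_mem_coreE e)))
      (fun e => (coreNbr_subset e).trans coreE_subset) coreEdge_disjoint_coreNbr
      core_blocks_disjoint).trans ?_
    refine add_le_add le_rfl ?_
    -- A pair of core edges in a common block is determined by the block and two edges of it.
    have : (Finset.univ.filter fun z : (Fin t × Fin k × Fin k) × (Fin t × Fin k × Fin k) =>
        z.1.1 = z.2.1).card ≤ t * k ^ 4 := by
      have hsub : (Finset.univ.filter fun z : (Fin t × Fin k × Fin k) × (Fin t × Fin k × Fin k) =>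
          z.1.1 = z.2.1) ⊆ (Finset.univ : Finset (Fin t × (Fin k × Fin k) × (Fin k × Fin k))).image
            (fun w => ((w.1, w.2.1), (w.1, w.2.2))) := by
        rintro ⟨⟨c, e⟩, ⟨c', f⟩⟩ h
        obtain rfl : c = c' := (Finset.mem_filter.mp h).2
        exact Finset.mem_image.mpr ⟨(c, e, f), Finset.mem_univ _, rfl⟩
      refine (Finset.card_le_card hsub).trans (Finset.card_image_le.trans (le_of_eq ?_))
      simp only [Finset.card_univ, Fintype.card_prod, Fintype.card_fin]
      ring
    exact_mod_cast this
  have hbad2 := chebyshev_lower (allE t k a).powerset (bw p (allE t k a))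
    (fun S => ((isoE S).card : ℝ)) (fun S _ => bw_nonneg hp hp1 _ S) (bw_sum p _)
    (isoMean p t k a) (t * k ^ 4) (t * k - a) hmean hsec hd
  rw [expMatch_image]
  calc _ ≤ ((t * k + a : ℝ) - 2 * s) * ∑ S ∈ (allE t k a).powerset, (bw p (allE t k a) S
        - bw p (allE t k a) S *
          (if ∃ z ∈ densePairs t k a s, Disjoint (z.1 ×ˢ z.2) S then 1 else 0)
        - bw p (allE t k a) S * (if ((isoE S).card : ℝ) < t * k - a then 1 else 0)) := by
        refine mul_le_mul_of_nonneg_left ?_ hs'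
        rw [Finset.sum_sub_distrib, Finset.sum_sub_distrib, bw_sum]
        linarith
    _ ≤ _ := by
        rw [Finset.mul_sum]
        refine Finset.sum_le_sum fun S _ => ?_
        have hw := bw_nonneg hp hp1 (allE t k a) S
        have hm : (0 : ℝ) ≤ matchNum (S.image (toEdge φ)) := Nat.cast_nonneg _
        by_cases h1 : ∃ z ∈ densePairs t k a s, Disjoint (z.1 ×ˢ z.2) S
        · rw [if_pos h1]
          have : 0 ≤ bw p (allE t k a) S * (if ((isoE S).card : ℝ) < t * k - a then 1 else 0) := by
            split_ifs <;> simp [hw]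
          refine le_trans ?_ (mul_nonneg hw hm)
          exact mul_nonpos_of_nonneg_of_nonpos hs' (by linarith)
        · by_cases h2 : ((isoE S).card : ℝ) < t * k - a
          · rw [if_neg h1, if_pos h2]
            refine le_trans ?_ (mul_nonneg hw hm)
            exact mul_nonpos_of_nonneg_of_nonpos hs' (by linarith)
          · rw [if_neg h1, if_neg h2]
            have h3 : t * k - a ≤ (isoE S).card := by
              have : (t * k : ℝ) ≤ (isoE S).card + a := by linarith
              have : t * k ≤ (isoE S).card + a := by exact_mod_cast this
              omega
            have h4 := matching_of_good φ S s ha h3 h1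
            have h5 : (t * k + a : ℝ) ≤ matchNum (S.image (toEdge φ)) + 2 * s := by
              exact_mod_cast h4
            rw [mul_zero, sub_zero, sub_zero, mul_comm]
            exact mul_le_mul_of_nonneg_left (by linarith) hw

end Construction

/-! ### Choice of parameters -/

section Parameters

/-- The union bound `4 ^ n * (1 - p) ^ (s * s)` over pairs of `s`-sets vanishes as `n → ∞`
when `s` is linear in `n`. -/
lemma union_bound_small {p : ℝ} (hp : 0 < p) (hp1 : p < 1) {δ : ℝ} (hδ : 0 < δ) :
    ∃ n₀ : ℕ, ∀ n s : ℕ, n₀ ≤ n → δ * n ≤ s → 4 ^ n * (1 - p) ^ (s * s) ≤ δ := by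
  have hq : (0 : ℝ) ≤ 1 - p := by linarith
  obtain ⟨r, hr⟩ := exists_pow_lt_of_lt_one (show (0 : ℝ) < 1 / 8 by norm_num)
    (show 1 - p < 1 by linarith)
  obtain ⟨N, hN⟩ := exists_pow_lt_of_lt_one hδ (show (1 / 2 : ℝ) < 1 by norm_num)
  obtain ⟨R, hR⟩ := exists_nat_ge (r / δ ^ 2)
  refine ⟨max N R, fun n s hn hs => ?_⟩
  have hRn : (R : ℝ) ≤ n := by exact_mod_cast (le_max_right _ _).trans hn
  have h1 : (r : ℝ) ≤ δ ^ 2 * n := by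
    rw [div_le_iff₀ (by positivity)] at hR
    nlinarith [sq_nonneg δ]
  have h2 : r * n ≤ s * s := by
    have : (r * n : ℝ) ≤ s * s := by
      calc (r * n : ℝ) ≤ δ ^ 2 * n * n := mul_le_mul_of_nonneg_right h1 (Nat.cast_nonneg _)
        _ = (δ * n) * (δ * n) := by ring
        _ ≤ s * s := mul_self_le_mul_self (by positivity) hs
    exact_mod_cast this
  calc 4 ^ n * (1 - p) ^ (s * s) ≤ 4 ^ n * (1 - p) ^ (r * n) :=
        mul_le_mul_of_nonneg_left (pow_le_pow_of_le_one hq (by linarith) h2) (by positivity)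
    _ = (4 * (1 - p) ^ r) ^ n := by rw [mul_pow, pow_mul]
    _ ≤ (1 / 2) ^ n := pow_le_pow_left₀ (by positivity) (by linarith) n
    _ ≤ (1 / 2) ^ N := pow_le_pow_of_le_one (by norm_num) (by norm_num)
        ((le_max_left _ _).trans hn)
    _ ≤ δ := hN.le

/-- Splitting each side into `t * k` core and `a` auxiliary vertices so that `t * k - a` is
`0.7 * (k * p) * (t * k)` up to an error of `2 * k`. -/
lemma exists_split {p : ℝ} (hp : 0 < p) {k : ℕ} (hk : 1 ≤ k)
    (hq : (k : ℝ) * p ≤ 9 / 8) (n T : ℕ) (hn : 2 * k * (T + 1) ≤ n) :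
    ∃ t a : ℕ, n = t * k + a ∧ T ≤ t ∧
      (t * k : ℝ) - a ≤ 0.7 * (k * p) * (t * k) ∧
      0.7 * (k * p) * (t * k) - 2 * k < (t * k : ℝ) - a := by
  set θ : ℝ := 0.7 * (k * p) with hθ
  have hk0 : (1 : ℝ) ≤ k := by exact_mod_cast hk
  have hθ0 : 0 < θ := by positivity
  have hθ1 : θ < 1 := by rw [hθ]; linarith
  have hc : 0 < k * (2 - θ) := by nlinarith
  set t := ⌊(n : ℝ) / (k * (2 - θ))⌋₊ with ht
  have h1 : (t : ℝ) * (k * (2 - θ)) ≤ n := by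
    rw [← le_div_iff₀ hc]
    exact Nat.floor_le (by positivity)
  have h2 : (n : ℝ) < (t + 1) * (k * (2 - θ)) := by
    rw [← div_lt_iff₀ hc]
    exact Nat.lt_floor_add_one _
  have htk : (0 : ℝ) ≤ t * k := by positivity
  have hle : t * k ≤ n := by
    have : (t * k : ℝ) ≤ n := by nlinarith
    exact_mod_cast this
  obtain ⟨a, ha⟩ := Nat.exists_eq_add_of_le hle
  have ha' : (n : ℝ) = t * k + a := by exact_mod_cast ha
  refine ⟨t, a, ha, ?_, by nlinarith, by nlinarith⟩
  have h3 : ((2 * k * (T + 1) : ℕ) : ℝ) ≤ n := by exact_mod_cast hn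
  push_cast at h3
  by_contra hlt
  have h4 : (t : ℝ) + 1 ≤ T := by exact_mod_cast not_le.mp hlt
  have h5 : ((t : ℝ) + 1) * (k * (2 - θ)) ≤ (t + 1) * (k * 2) := by
    refine mul_le_mul_of_nonneg_left ?_ (by positivity)
    nlinarith
  nlinarith

lemma variance_arith {t k δ g : ℝ} (ht : 0 < t) (hk : 0 < k) (hδ : 0 < δ)
    (hT : 25600 * k ^ 2 / δ ≤ t) (hg : t * k / 160 ≤ g) : t * k ^ 4 / g ^ 2 ≤ δ := by
  calc t * k ^ 4 / g ^ 2 ≤ t * k ^ 4 / (t * k / 160) ^ 2 := by gcongr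
    _ = 25600 * k ^ 2 / t := by
      field_simp
      norm_num
    _ ≤ δ := by
      rw [div_le_iff₀ ht]
      rw [div_le_iff₀ hδ] at hT
      linarith

/-- Since `1 ≤ b * p / 2`, each core edge may be counted as `b * p / 2` edges. -/
lemma bMatching_arith {p b t k a : ℝ} (hp : 0 < p) (hb : 2 / p ≤ b) (htk : 0 ≤ t * (k * k))
    (h : 2 * a + k * p * (t * k) / 2 < 0.99 * (t * k + a)) :
    2 * a * b + t * (k * k) < 0.99 * b * (t * k + a) := by
  have hb0 : 0 < b := lt_of_lt_of_le (by positivity) hb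
  rw [div_le_iff₀ hp] at hb
  linarith [mul_lt_mul_of_pos_left h hb0, mul_le_mul_of_nonneg_left hb htk]

end Parameters

theorem b_matching_lemma_optimality (p : ℝ) (hp : 0 < p) (hp1 : p < 1)
    (ε : ℝ) (hε : 0 < ε) :
    ∃ n0 : ℕ, ∀ n : ℕ, n0 ≤ n →
      ∃ E : Finset (Sym2 (Fin n ⊕ Fin n)),
        (∀ e ∈ E, ∃ i j : Fin n, e = s(Sum.inl i, Sum.inr j)) ∧
        (1 - ε) * (n : ℝ) ≤ expMatch p E ∧
        ∀ b : ℕ, 2 / p ≤ (b : ℝ) →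
          ∀ B : Finset (Sym2 (Fin n ⊕ Fin n)), B ⊆ E →
            (∀ v, edeg B v ≤ b) → (B.card : ℝ) < 0.99 * (b : ℝ) * (n : ℝ) := by
  obtain ⟨δ, hδ0, hδ1, hδε⟩ : ∃ δ : ℝ, 0 < δ ∧ δ ≤ 1 / 8 ∧ 8 * δ ≤ ε :=
    ⟨min ε 1 / 8, by positivity, by linarith [min_le_right ε 1], by linarith [min_le_left ε 1]⟩
  -- The block size makes the mean degree `k * p` of a realized block about `1 / 8`, so that most
  -- realized core edges are isolated.
  obtain ⟨k, hk, hkp, hkp'⟩ : ∃ k : ℕ, 1 ≤ k ∧ 1 / 8 ≤ (k : ℝ) * p ∧ ((k : ℝ) - 1) * p ≤ 1 / 8 := by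
    have hpos : 0 < 1 / (8 * p) := by positivity
    refine ⟨⌈1 / (8 * p)⌉₊, Nat.ceil_pos.mpr hpos, ?_, ?_⟩
    · have := Nat.le_ceil (1 / (8 * p))
      rw [div_le_iff₀ (by positivity)] at this
      linarith
    · have h := (Nat.ceil_lt_add_one hpos.le).le
      have h' : ((⌈1 / (8 * p)⌉₊ : ℝ) - 1) * p ≤ 1 / (8 * p) * p :=
        mul_le_mul_of_nonneg_right (by linarith) hp.le
      refine h'.trans (le_of_eq ?_)
      field_simp
  have hk0 : (1 : ℝ) ≤ k := by exact_mod_cast hk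
  obtain ⟨n₁, hn₁⟩ := union_bound_small hp hp1 hδ0
  obtain ⟨n₂, hn₂⟩ := exists_nat_ge (1 / δ)
  obtain ⟨T₀, hT₀⟩ := exists_nat_ge (25600 * k ^ 2 / δ)
  set T := max T₀ 400 with hT
  refine ⟨max (max n₁ n₂) (2 * k * (T + 1)), fun n hn => ?_⟩
  have hnn₁ : n₁ ≤ n := ((le_max_left _ _).trans (le_max_left _ _)).trans hn
  have hnn₂ : n₂ ≤ n := ((le_max_right _ _).trans (le_max_left _ _)).trans hn
  obtain ⟨t, a, rfl, hTt, hd1, hd2⟩ := exists_split hp hk (by linarith) n T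
    ((le_max_right _ _).trans hn)
  have ht400 : (400 : ℝ) ≤ t := by exact_mod_cast (le_max_right T₀ 400).trans hTt
  have htT₀ : (T₀ : ℝ) ≤ t := by exact_mod_cast (le_max_left T₀ 400).trans hTt
  have hm : 400 * (k : ℝ) ≤ t * k := mul_le_mul_of_nonneg_right ht400 (by linarith)
  have hqm : 1 / 8 * (t * k : ℝ) ≤ k * p * (t * k) :=
    mul_le_mul_of_nonneg_right hkp (by positivity)
  have hatk : (a : ℝ) ≤ t * k := by linarith
  let φ : Side t k a ≃ Fin (t * k + a) := Fintype.equivFinOfCardEq (by simp)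
  refine ⟨(allE t k a).image (toEdge φ), ?_, ?_, ?_⟩
  · intro e he
    obtain ⟨z, _, rfl⟩ := Finset.mem_image.mp he
    exact ⟨_, _, rfl⟩
  · have hn0 : (0 : ℝ) ≤ t * k + a := by positivity
    have hn1 : 1 ≤ δ * (t * k + a : ℝ) := by
      have h : (n₂ : ℝ) ≤ t * k + a := by exact_mod_cast hnn₂
      rw [div_le_iff₀ hδ0] at hn₂
      nlinarith
    set s := ⌈δ * (t * k + a : ℝ)⌉₊ with hs
    have hs1 : δ * (t * k + a : ℝ) ≤ s := Nat.le_ceil _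
    have hs2 : (s : ℝ) ≤ 2 * (δ * (t * k + a : ℝ)) := by
      have := Nat.ceil_lt_add_one (a := δ * (t * k + a : ℝ)) (by positivity)
      linarith
    have hs3 : 2 * s ≤ t * k + a := by
      have : (2 * s : ℝ) ≤ t * k + a := by nlinarith
      exact_mod_cast this
    have hmean := isoMean_ge (t := t) (a := a) hp hp1 hk hkp'
    have hgap : (t * k : ℝ) / 160 ≤ isoMean p t k a - (t * k - a) := by linarith
    have hmain := expMatch_ge hp hp1 φ s (by exact_mod_cast hatk) hs3 (by linarith)
    have he1 : 4 ^ (t * k + a) * (1 - p) ^ (s * s) ≤ δ :=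
      hn₁ _ s hnn₁ (by push_cast; exact hs1)
    have he2 : (t * k ^ 4 : ℝ) / (isoMean p t k a - (t * k - a)) ^ 2 ≤ δ := by
      refine variance_arith (by linarith) (by linarith) hδ0 ?_ hgap
      exact hT₀.trans htT₀
    push_cast
    refine le_trans ?_ hmain
    have h1 : (t * k + a : ℝ) * (1 - 4 * δ) ≤ (t * k + a : ℝ) - 2 * s := by linarith
    calc (1 - ε) * (t * k + a : ℝ) ≤ (t * k + a : ℝ) * (1 - 4 * δ) * (1 - 2 * δ) := by
          nlinarith [mul_nonneg hn0 (sq_nonneg δ), mul_nonneg hn0 hδ0.le,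
            mul_le_mul_of_nonneg_right hδε hn0]
      _ ≤ _ := mul_le_mul h1 (by linarith) (by linarith)
          (le_trans (mul_nonneg hn0 (by linarith)) h1)
  · intro b hb B hB hdeg
    have hcard := card_bMatching_le φ b B hB hdeg
    have hcard' : (B.card : ℝ) ≤ 2 * a * b + t * (k * k) := by exact_mod_cast hcard
    push_cast
    exact hcard'.trans_lt (bMatching_arith hp hb (by positivity) (by linarith))
end
end

section
/- Let M and M' be edge-disjoint matchings in a finite simple graph G, and let α1 and α3 denote the numbers of connected components of M △ M' that are augmenting paths for M' of length 1 and of length 3, respectively. If each edge of M is realized independently with probability p ∈ (0,1), then the expected maximum matching size of the graph consisting of M' together with the realized edges of M is at least |M'| + α1·p + α3·p². -/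
/-!
Flipping `M'` along a family `A` of augmenting components whose `M`-edges are all realized gives
a matching inside `M' ∪ S`, because distinct components share no vertex, and each flip gains one
edge. Hence the maximum matching size of `M' ∪ S` is at least `|M'|` plus the number of augmenting
components `P` with `P ∩ M ⊆ S` (`card_add_le_matchNum`). Taking expectations, such a component
contributes `Pr[P ∩ M ⊆ S] = p ^ |P ∩ M|` (`sum_weight_superset`), and `|P ∩ M|` is `1` for paths
of length one and `2` for paths of length three.
-/

open scoped Classical symmDiff
open Real

noncomputable section

/-- `P` is a connected component of the symmetric difference `M ∆ M'` that is an
augmenting path of length `k` for `M'`: its edges form a (simple) path on `k + 1`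
distinct vertices, edges at even positions belong to `M` and edges at odd positions
belong to `M'`, and its two endpoint vertices are not covered by `M'`. -/
def IsAugPathComp {V : Type*} [DecidableEq V] (M M' P : Finset (Sym2 V)) (k : ℕ) : Prop :=
  P ⊆ M ∆ M' ∧
  (∀ e ∈ M ∆ M', e ∉ P → ∀ w : V, w ∈ e → ∀ g ∈ P, w ∉ g) ∧
  ∃ w : Fin (k + 1) → V, Function.Injective w ∧
    P = Finset.image (fun i : Fin k => s(w i.castSucc, w i.succ)) Finset.univ ∧
    (∀ i : Fin k, (i : ℕ) % 2 = 0 → s(w i.castSucc, w i.succ) ∈ M) ∧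
    (∀ i : Fin k, (i : ℕ) % 2 = 1 → s(w i.castSucc, w i.succ) ∈ M') ∧
    (∀ e ∈ M', w 0 ∉ e) ∧ (∀ e ∈ M', w (Fin.last k) ∉ e)

/-- `Q` is a union of connected components of the edge set `D`: no edge of `D` outside `Q`
meets an edge of `Q`. -/
def ClosedIn {V : Type*} (D Q : Finset (Sym2 V)) : Prop :=
  ∀ e ∈ D, e ∉ Q → ∀ w : V, w ∈ e → ∀ g ∈ Q, w ∉ g

/-- The properties of an augmenting component `P` with `c` edges in `M` that the argument uses.
Connectedness is encoded as: a union of components that contains one edge of `P`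
contains all of `P`. -/
structure AugComp {V : Type*} [DecidableEq V] (M M' P : Finset (Sym2 V)) (c : ℕ) : Prop where
  sub : P ⊆ M ∆ M'
  closed : ClosedIn (M ∆ M') P
  conn : ∀ Q, ClosedIn (M ∆ M') Q → ∀ e ∈ P, e ∈ Q → P ⊆ Q
  cardM : (P ∩ M).card = c
  cardM' : (P ∩ M').card + 1 = c

lemma augComp_one {V : Type*} [DecidableEq V] {M M' P : Finset (Sym2 V)}
    (hdisj : Disjoint M M') (h : IsAugPathComp M M' P 1) : AugComp M M' P 1 := by
  obtain ⟨hs, hc, w, -, hP, hM, -, -, -⟩ := h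
  have h0 := hM 0 rfl
  have hP' : P = {s(w 0, w 1)} := by rw [hP]; ext; simp
  have h0 : s(w 0, w 1) ∈ M := h0
  have h0' : s(w 0, w 1) ∉ M' := Finset.disjoint_left.1 hdisj h0
  refine ⟨hs, hc, ?_, ?_, ?_⟩
  · intro Q _ e he heQ
    rw [hP', Finset.mem_singleton] at he
    rw [hP', Finset.singleton_subset_iff]
    exact he ▸ heQ
  · rw [hP', Finset.singleton_inter_of_mem h0, Finset.card_singleton]
  · rw [hP', Finset.singleton_inter_of_notMem h0', Finset.card_empty]

lemma augComp_three {V : Type*} [DecidableEq V] {M M' P : Finset (Sym2 V)}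
    (hdisj : Disjoint M M') (h : IsAugPathComp M M' P 3) : AugComp M M' P 2 := by
  obtain ⟨hs, hc, w, hw, hP, hM, hM', -, -⟩ := h
  have h0 : s(w 0, w 1) ∈ M := hM 0 rfl
  have h1 : s(w 1, w 2) ∈ M' := hM' 1 rfl
  have h2 : s(w 2, w 3) ∈ M := hM 2 rfl
  have hP' : P = {s(w 0, w 1), s(w 1, w 2), s(w 2, w 3)} := by
    rw [hP]; ext x; simp [Fin.exists_fin_succ, eq_comm]
  have h0' : s(w 0, w 1) ∉ M' := Finset.disjoint_left.1 hdisj h0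
  have h1' : s(w 1, w 2) ∉ M := Finset.disjoint_right.1 hdisj h1
  have h2' : s(w 2, w 3) ∉ M' := Finset.disjoint_left.1 hdisj h2
  have hne : s(w 0, w 1) ≠ s(w 2, w 3) := by
    simp [hw.eq_iff]
  refine ⟨hs, hc, ?_, ?_, ?_⟩
  · intro Q hQ e he heQ
    have d0 := hs (by rw [hP']; simp : s(w 0, w 1) ∈ P)
    have d1 := hs (by rw [hP']; simp : s(w 1, w 2) ∈ P)
    have d2 := hs (by rw [hP']; simp : s(w 2, w 3) ∈ P)
    have a01 : s(w 0, w 1) ∈ Q → s(w 1, w 2) ∈ Q := fun h => by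
      by_contra hn
      exact hQ _ d1 hn (w 1) (by simp) _ h (by simp)
    have a10 : s(w 1, w 2) ∈ Q → s(w 0, w 1) ∈ Q := fun h => by
      by_contra hn
      exact hQ _ d0 hn (w 1) (by simp) _ h (by simp)
    have a12 : s(w 1, w 2) ∈ Q → s(w 2, w 3) ∈ Q := fun h => by
      by_contra hn
      exact hQ _ d2 hn (w 2) (by simp) _ h (by simp)
    have a21 : s(w 2, w 3) ∈ Q → s(w 1, w 2) ∈ Q := fun h => by
      by_contra hn
      exact hQ _ d1 hn (w 2) (by simp) _ h (by simp)
    have : s(w 1, w 2) ∈ Q := by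
      rw [hP'] at he
      simp only [Finset.mem_insert, Finset.mem_singleton] at he
      rcases he with rfl | rfl | rfl
      · exact a01 heQ
      · exact heQ
      · exact a21 heQ
    rw [hP']
    intro x hx
    simp only [Finset.mem_insert, Finset.mem_singleton] at hx
    rcases hx with rfl | rfl | rfl
    · exact a10 this
    · exact this
    · exact a12 this
  · have : P ∩ M = {s(w 0, w 1), s(w 2, w 3)} := by
      rw [hP', Finset.insert_inter_of_mem h0, Finset.insert_inter_of_notMem h1',
        Finset.singleton_inter_of_mem h2]
    rw [this, Finset.card_pair hne]
  · have : P ∩ M' = {s(w 1, w 2)} := by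
      rw [hP', Finset.insert_inter_of_notMem h0', Finset.insert_inter_of_mem h1,
        Finset.singleton_inter_of_notMem h2']
      rfl
    rw [this, Finset.card_singleton]

lemma card_le_matchNum_s18 {V : Type*} {N E : Finset (Sym2 V)} (hN : N ⊆ E)
    (hm : IsMatchingSet N) : N.card ≤ matchNum E :=
  Finset.le_sup (f := Finset.card)
    (Finset.mem_filter.2 ⟨Finset.mem_powerset.2 hN, hm⟩)

/-- Flipping `M'` along all members of `A` yields a matching with `|A|` more edges. -/
lemma card_add_le_matchNum {V : Type*} [DecidableEq V] {M M' S : Finset (Sym2 V)}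
    (hMm : IsMatchingSet M) (hM'm : IsMatchingSet M') (hdisj : Disjoint M M')
    (A : Finset (Finset (Sym2 V))) (hA : ∀ P ∈ A, ∃ c, AugComp M M' P c)
    (hAS : ∀ P ∈ A, P ∩ M ⊆ S) :
    M'.card + A.card ≤ matchNum (M' ∪ S) := by
  set U : Finset (Sym2 V) := A.biUnion id with hU
  have hdA : ∀ P ∈ A, ∀ Q ∈ A, P ≠ Q → Disjoint P Q := by
    intro P hP Q hQ hne
    obtain ⟨_, cP⟩ := hA P hP
    obtain ⟨_, cQ⟩ := hA Q hQ
    refine Finset.disjoint_left.2 fun e heP heQ => hne ?_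
    exact (cP.conn Q cQ.closed e heP heQ).antisymm (cQ.conn P cP.closed e heQ heP)
  have hcardX : ∀ X : Finset (Sym2 V), (U ∩ X).card = ∑ P ∈ A, (P ∩ X).card := by
    intro X
    rw [hU, Finset.biUnion_inter, Finset.card_biUnion]
    · rfl
    · intro P hP Q hQ hne
      exact (hdA P hP Q hQ hne).mono Finset.inter_subset_left Finset.inter_subset_left
  have hgain : (U ∩ M).card = (U ∩ M').card + A.card := by
    rw [hcardX, hcardX, Finset.card_eq_sum_ones A, ← Finset.sum_add_distrib]
    refine Finset.sum_congr rfl fun P hP => ?_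
    obtain ⟨c, h⟩ := hA P hP
    rw [h.cardM, h.cardM']
  have hcross : ∀ e ∈ M' \ U, ∀ g ∈ U ∩ M, ∀ v : V, v ∈ e → v ∉ g := by
    intro e he g hg v hv
    rw [Finset.mem_sdiff] at he
    obtain ⟨P, hP, hgP⟩ := Finset.mem_biUnion.1 (Finset.mem_inter.1 hg).1
    obtain ⟨c, h⟩ := hA P hP
    refine h.closed e ?_ (fun heP => he.2 (Finset.mem_biUnion.2 ⟨P, hP, heP⟩)) v hv g hgP
    exact Finset.mem_symmDiff.2 (Or.inr ⟨he.1, Finset.disjoint_right.1 hdisj he.1⟩)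
  have hN : IsMatchingSet ((M' \ U) ∪ (U ∩ M)) := by
    refine ⟨fun e he => ?_, fun e he f hf hne v hv hvf => ?_⟩
    · rcases Finset.mem_union.1 he with he | he
      · exact hM'm.1 e (Finset.mem_sdiff.1 he).1
      · exact hMm.1 e (Finset.mem_inter.1 he).2
    · rcases Finset.mem_union.1 he with he | he <;> rcases Finset.mem_union.1 hf with hf | hf
      · exact hM'm.2 e (Finset.mem_sdiff.1 he).1 f (Finset.mem_sdiff.1 hf).1 hne v hv hvf
      · exact hcross e he f hf v hv hvf
      · exact hcross f hf e he v hvf hv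
      · exact hMm.2 e (Finset.mem_inter.1 he).2 f (Finset.mem_inter.1 hf).2 hne v hv hvf
  have hsub : (M' \ U) ∪ (U ∩ M) ⊆ M' ∪ S := by
    refine Finset.union_subset_union Finset.sdiff_subset fun e he => ?_
    obtain ⟨heU, heM⟩ := Finset.mem_inter.1 he
    obtain ⟨P, hP, heP⟩ := Finset.mem_biUnion.1 heU
    exact hAS P hP (Finset.mem_inter.2 ⟨heP, heM⟩)
  have hd : Disjoint (M' \ U) (U ∩ M) :=
    Finset.disjoint_left.2 fun e he he' =>
      (Finset.mem_sdiff.1 he).2 (Finset.mem_inter.1 he').1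
  have hle := card_le_matchNum_s18 hsub hN
  have h2 := Finset.card_sdiff_add_card_inter M' U
  rw [Finset.card_union_of_disjoint hd] at hle
  rw [Finset.inter_comm] at h2
  omega

/-- A random subset of `M` with edge probability `p` contains a fixed `T ⊆ M` with
probability `p ^ |T|`. -/
lemma sum_weight_superset {α : Type*} [DecidableEq α] (p : ℝ) (M T : Finset α) (hT : T ⊆ M) :
    ∑ S ∈ M.powerset, p ^ S.card * (1 - p) ^ (M.card - S.card) * (if T ⊆ S then (1 : ℝ) else 0)
      = p ^ T.card := by
  have hI : M.powerset.filter (fun S => T ⊆ S) = (M \ T).powerset.image (T ∪ ·) := by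
    rw [← Finset.Icc_eq_image_powerset hT]
    ext S
    simp [and_comm]
  have hdis : ∀ R ∈ (M \ T).powerset, Disjoint T R := fun R hR =>
    Finset.disjoint_sdiff.mono_right (Finset.mem_powerset.1 hR)
  simp only [mul_ite, mul_one, mul_zero]
  rw [← Finset.sum_filter, hI, Finset.sum_image]
  · have hone := Finset.sum_pow_mul_eq_add_pow p (1 - p) (M \ T)
    rw [add_sub_cancel, one_pow] at hone
    calc _ = ∑ R ∈ (M \ T).powerset,
          p ^ T.card * (p ^ R.card * (1 - p) ^ ((M \ T).card - R.card)) := by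
          refine Finset.sum_congr rfl fun R hR => ?_
          rw [Finset.card_union_of_disjoint (hdis R hR), Finset.card_sdiff_of_subset hT,
            pow_add, Nat.sub_sub, mul_assoc]
      _ = p ^ T.card := by rw [← Finset.mul_sum, hone, mul_one]
  · intro R hR R' hR' h
    have h : T ∪ R = T ∪ R' := h
    rw [← Finset.union_sdiff_cancel_left (hdis R hR), h,
      Finset.union_sdiff_cancel_left (hdis R' hR')]

theorem expected_augmented_matching {V : Type*} [Fintype V] [DecidableEq V]
    (p : ℝ) (hp : 0 < p) (hp1 : p < 1)
    (M M' : Finset (Sym2 V)) (hMm : IsMatchingSet M) (hM'm : IsMatchingSet M')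
    (hdisj : Disjoint M M') :
    (M'.card : ℝ) +
        (((M ∆ M').powerset.filter fun P => IsAugPathComp M M' P 1).card : ℝ) * p +
        (((M ∆ M').powerset.filter fun P => IsAugPathComp M M' P 3).card : ℝ) * p ^ 2 ≤
      ∑ S ∈ M.powerset,
        p ^ S.card * (1 - p) ^ (M.card - S.card) * (matchNum (M' ∪ S) : ℝ) := by
  set A₁ := (M ∆ M').powerset.filter fun P => IsAugPathComp M M' P 1
  set A₃ := (M ∆ M').powerset.filter fun P => IsAugPathComp M M' P 3
  have h1 : ∀ P ∈ A₁, AugComp M M' P 1 := fun P hP =>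
    augComp_one hdisj (Finset.mem_filter.1 hP).2
  have h3 : ∀ P ∈ A₃, AugComp M M' P 2 := fun P hP =>
    augComp_three hdisj (Finset.mem_filter.1 hP).2
  have hd : Disjoint A₁ A₃ := Finset.disjoint_left.2 fun P hP hP' => by
    have a := (h1 P hP).cardM
    have b := (h3 P hP').cardM
    omega
  have hA : ∀ P ∈ A₁ ∪ A₃, ∃ c, AugComp M M' P c := fun P hP =>
    (Finset.mem_union.1 hP).elim (fun h => ⟨1, h1 P h⟩) fun h => ⟨2, h3 P h⟩
  have hone : ∑ S ∈ M.powerset, p ^ S.card * (1 - p) ^ (M.card - S.card) = 1 := by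
    rw [Finset.sum_pow_mul_eq_add_pow, add_sub_cancel, one_pow]
  calc (M'.card : ℝ) + (A₁.card : ℝ) * p + (A₃.card : ℝ) * p ^ 2
      = M'.card + ∑ P ∈ A₁ ∪ A₃, p ^ (P ∩ M).card := by
        rw [Finset.sum_union hd,
          Finset.sum_congr rfl fun P hP => by rw [(h1 P hP).cardM],
          Finset.sum_congr (s₁ := A₃) rfl fun P hP => by rw [(h3 P hP).cardM]]
        simp [add_assoc]
    _ = ∑ S ∈ M.powerset, p ^ S.card * (1 - p) ^ (M.card - S.card) *
          ((M'.card : ℝ) + ∑ P ∈ A₁ ∪ A₃, if P ∩ M ⊆ S then (1 : ℝ) else 0) := by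
        simp only [mul_add, Finset.sum_add_distrib, Finset.mul_sum]
        rw [← Finset.sum_mul, hone, one_mul, Finset.sum_comm]
        congr 1
        exact Finset.sum_congr rfl fun P _ =>
          (sum_weight_superset p M (P ∩ M) Finset.inter_subset_right).symm
    _ ≤ _ := by
        refine Finset.sum_le_sum fun S _ => mul_le_mul_of_nonneg_left ?_ ?_
        · have := card_add_le_matchNum (S := S) hMm hM'm hdisj
            ((A₁ ∪ A₃).filter fun P => P ∩ M ⊆ S)
            (fun P hP => hA P (Finset.mem_filter.1 hP).1)
            (fun P hP => (Finset.mem_filter.1 hP).2)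
          rw [Finset.sum_boole]
          exact_mod_cast this
        · have : 0 ≤ 1 - p := by linarith
          positivity
end
end
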